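/- arXiv:2502.16042 — 2 statements merged into one kernel-verified Lean document; each statement's English description precedes it below -/
import Mathlib

section
/- (Asymptotic normality under a vanishing perturbation of the identity.) Fix K ≥ 2 and an arm k. Consider for each n a matrix Σ⁽ⁿ⁾ in the correlation elliptope with ‖Σ⁽ⁿ⁾ − I_n‖_op → 0, potential outcome vectors Y⁽ⁿ⁾(k) ∈ ℝⁿ, and the Gaussianization T⁽ⁿ⁾ ~ N(0, Σ⁽ⁿ⁾), D_i = g(T_i). Define Ỹ(k) = f_k(I_n)^{−1/2} f_k(Σ⁽ⁿ⁾)^{1/2} Y(k) (f_k entrywise; f_k(I_n) = ((K−1)/K²) I_n). If (1) max_i Ỹ_i(k)²/n → 0, (2) n·Var(τ̂_k) = ((K−1)/n)‖Ỹ(k)‖² converges to a positive limit σ², and (3) ‖Y⁽ⁿ⁾(k)‖² ≤ nM for some M > 0 and all n, then √n (τ̂_k − τ_k) converges in distribution to N(0, σ²), where τ_k = (1/n)Σ_i Y_i(k) and τ̂_k = (K/n)Σ_i 1{D_i=k}Y_i(k). -/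
open MeasureTheory ProbabilityTheory Matrix Real Filter
open scoped BigOperators ENNReal NNReal Topology

noncomputable section

/-- The spectral (operator) norm of a square real matrix. -/
def opNorm {m : ℕ} (A : Matrix (Fin m) (Fin m) ℝ) : ℝ :=
  ‖(Matrix.toEuclideanCLM (𝕜 := ℝ) A : EuclideanSpace ℝ (Fin m) →L[ℝ] EuclideanSpace ℝ (Fin m))‖

/-- The standard normal CDF `Φ`. -/
def stdGaussianCDF (x : ℝ) : ℝ := (gaussianReal 0 1 (Set.Iic x)).toReal

/-- The set of values `t` mapped by the Gaussianization map `g` to arm `k`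
(arms are `0`-indexed: `k : Fin K` represents arm `k+1`; `q m = Φ⁻¹(m/K)`). -/
def armSet (q : ℕ → ℝ) (K : ℕ) (k : Fin K) : Set ℝ :=
  if k.val = 0 then Set.Iic (q 1)
  else if k.val = K - 1 then Set.Ioi (q (K - 1))
  else Set.Ioc (q k.val) (q (k.val + 1))

/-- The function `r_{i,j}(ρ)`. -/
def rfun (q : ℕ → ℝ) (i j : ℕ) (ρ : ℝ) : ℝ :=
  ∫ r in (0 : ℝ)..ρ,
    (2 * π * Real.sqrt (1 - r ^ 2))⁻¹ *
      Real.exp (-((q i ^ 2 + q j ^ 2 - 2 * r * q i * q j) / (2 * (1 - r ^ 2))))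

/-- The function `f_k` (arms `0`-indexed: `k : Fin K` represents arm `k+1`). -/
def fkfun (q : ℕ → ℝ) (K : ℕ) (k : Fin K) (ρ : ℝ) : ℝ :=
  if k.val = 0 then rfun q 1 1 ρ
  else if k.val = K - 1 then rfun q (K - 1) (K - 1) ρ
  else rfun q k.val k.val ρ + rfun q (k.val + 1) (k.val + 1) ρ
    - 2 * rfun q k.val (k.val + 1) ρ

/-!
A vector `T ~ N(0, Σ)` is coupled with a vector `Z ~ N(0, I)` by `T = Σ^{1/2} Z`. Write `h` for the
indicator of the arm and `c(ρ)` for the covariance of `h(X)` and `h(Y)` for a standard normal pair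
`(X, Y)` with correlation `ρ`; by Plackett's formula `c = f_k`. The `L²` distance between the
estimation errors built on `T` and on `Z` is a quadratic form in the matrices `c(Σ)`,
`c(Σ^{1/2})` and `c(1) I`. Since `c(ρ) = c'(0) ρ + O(ρ²)` near `0`, and the off-diagonal entries of
`Σ - I` have squares with row sums at most `‖Σ - I‖²`, these matrices tend to `c(1) I` in operator
norm, so the `L²` distance vanishes and it suffices to prove the Lindeberg central limit theorem
for the independent coordinates of `Z`. The same bound gives
`‖f_k(I)^{-1/2} f_k(Σ)^{1/2} - I‖ → 0`, which carries the hypotheses on `Ỹ` over to `Y`.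
-/

/-- The law of a vector of independent standard normal variables indexed by `ι`. -/
abbrev stdNormalPi (ι : Type*) [Fintype ι] : Measure (ι → ℝ) :=
  Measure.pi fun _ => gaussianReal 0 1

/-- The bivariate normal law with mean zero, unit variances and correlation `ρ`, realised as the
law of `(x, ρ x + √(1 - ρ²) y)` for independent standard normal `x` and `y`; it has this meaning
only for `|ρ| ≤ 1`. -/
def normalPair (ρ : ℝ) : Measure (ℝ × ℝ) :=
  ((gaussianReal 0 1).prod (gaussianReal 0 1)).map fun p =>
    (p.1, ρ * p.1 + √(1 - ρ ^ 2) * p.2)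

instance (ρ : ℝ) : IsProbabilityMeasure (normalPair ρ) :=
  Measure.isProbabilityMeasure_map (by fun_prop)

section GaussianLaws

variable {ι κ κ' : Type*} [Fintype ι] [Fintype κ] [Fintype κ']

lemma charFunDual_stdNormal (L : StrongDual ℝ ℝ) :
    charFunDual (gaussianReal 0 1) L = Complex.exp ((-(L 1 ^ 2 / 2) : ℝ)) := by
  have hL : ⇑L = (L 1 * ·) := by
    ext x
    simpa [mul_comm] using L.map_smul x 1
  rw [charFunDual_eq_charFun_map_one, hL, gaussianReal_map_const_mul, charFun_gaussianReal]
  simp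

lemma charFunDual_stdNormalPi [DecidableEq ι] (L : StrongDual ℝ (ι → ℝ)) :
    charFunDual (stdNormalPi ι) L =
      Complex.exp ((-((∑ i, L (Pi.single i 1) ^ 2) / 2) : ℝ)) := by
  simp only [charFunDual_pi, charFunDual_stdNormal, ← Complex.exp_sum, ← Complex.ofReal_sum,
    Finset.sum_neg_distrib, Finset.sum_div, ContinuousLinearMap.comp_apply,
    ContinuousLinearMap.single_apply]

lemma charFunDual_map_stdNormalPi {E : Type*} [NormedAddCommGroup E] [NormedSpace ℝ E]
    [MeasurableSpace E] [BorelSpace E] [DecidableEq ι] (A : (ι → ℝ) →L[ℝ] E)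
    (L : StrongDual ℝ E) :
    charFunDual ((stdNormalPi ι).map A) L =
      Complex.exp ((-((∑ i, L (A (Pi.single i 1)) ^ 2) / 2) : ℝ)) := by
  rw [charFunDual_map, charFunDual_stdNormalPi]
  rfl

lemma dual_pi_eq_dotProduct [DecidableEq ι] (L : StrongDual ℝ (ι → ℝ)) (x : ι → ℝ) :
    L x = (fun i => L (Pi.single i 1)) ⬝ᵥ x := by
  conv_lhs => rw [pi_eq_sum_univ' x, map_sum]
  simp [dotProduct, mul_comm]

lemma charFunDual_map_mulVec_stdNormalPi [DecidableEq ι] (A : Matrix ι κ ℝ)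
    (L : StrongDual ℝ (ι → ℝ)) :
    charFunDual ((stdNormalPi κ).map (A *ᵥ ·)) L =
      Complex.exp ((-(((fun i => L (Pi.single i 1)) ᵥ* (A * Aᵀ) ⬝ᵥ
        fun i => L (Pi.single i 1)) / 2) : ℝ)) := by
  classical
  set w : ι → ℝ := fun i => L (Pi.single i 1) with hw
  have hL (j : κ) : L (A *ᵥ Pi.single j 1) = (w ᵥ* A) j := by
    rw [dual_pi_eq_dotProduct, ← hw, dotProduct_mulVec, dotProduct_single_one]
  have h := charFunDual_map_stdNormalPi A.mulVecLin.toContinuousLinearMap L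
  simp only [LinearMap.coe_toContinuousLinearMap', coe_mulVecLin, hL] at h
  rw [← vecMul_vecMul, ← dotProduct_mulVec, mulVec_transpose]
  simpa only [dotProduct, sq] using h

theorem map_mulVec_stdNormalPi_congr {η : Type*} [Finite η] {A : Matrix η κ ℝ} {B : Matrix η κ' ℝ}
    (h : A * Aᵀ = B * Bᵀ) :
    (stdNormalPi κ).map (A *ᵥ ·) = (stdNormalPi κ').map (B *ᵥ ·) := by
  classical
  have := Fintype.ofFinite η
  have := Measure.isProbabilityMeasure_map (μ := stdNormalPi κ) (f := (A *ᵥ ·)) (by fun_prop)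
  have := Measure.isProbabilityMeasure_map (μ := stdNormalPi κ') (f := (B *ᵥ ·)) (by fun_prop)
  refine Measure.ext_of_charFunDual (funext fun L => ?_)
  rw [charFunDual_map_mulVec_stdNormalPi, charFunDual_map_mulVec_stdNormalPi, h]

lemma dual_prod_apply (L : StrongDual ℝ (ℝ × ℝ)) (x y : ℝ) :
    L (x, y) = x * L (1, 0) + y * L (0, 1) := by
  rw [← smul_eq_mul, ← smul_eq_mul, ← map_smul, ← map_smul, ← map_add]
  simp

lemma charFunDual_normalPair {ρ : ℝ} (hρ : ρ ^ 2 ≤ 1) (L : StrongDual ℝ (ℝ × ℝ)) :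
    charFunDual (normalPair ρ) L = Complex.exp
      ((-((L (1, 0) ^ 2 + 2 * ρ * (L (1, 0) * L (0, 1)) + L (0, 1) ^ 2) / 2) : ℝ)) := by
  have hA : normalPair ρ = ((gaussianReal 0 1).prod (gaussianReal 0 1)).map
      ((ContinuousLinearMap.fst ℝ ℝ ℝ).prod
        (ρ • ContinuousLinearMap.fst ℝ ℝ ℝ + √(1 - ρ ^ 2) • ContinuousLinearMap.snd ℝ ℝ ℝ)) :=
    rfl
  rw [hA, charFunDual_map, charFunDual_prod, charFunDual_stdNormal, charFunDual_stdNormal,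
    ← Complex.exp_add, ← Complex.ofReal_add]
  congr 2
  simp only [ContinuousLinearMap.comp_apply, ContinuousLinearMap.inl_apply,
    ContinuousLinearMap.inr_apply, ContinuousLinearMap.prod_apply, _root_.add_apply,
    _root_.smul_apply, ContinuousLinearMap.coe_fst', ContinuousLinearMap.coe_snd',
    smul_eq_mul, dual_prod_apply L _ (_ + _)]
  linear_combination (-(L (0, 1) ^ 2) / 2) * Real.sq_sqrt (sub_nonneg.2 hρ)

lemma dotProduct_sq_le_one {u v : ι → ℝ} (hu : u ⬝ᵥ u = 1) (hv : v ⬝ᵥ v = 1) :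
    (u ⬝ᵥ v) ^ 2 ≤ 1 := by
  have h := Finset.sum_mul_sq_le_sq_mul_sq Finset.univ u v
  simp only [sq (u _), sq (v _)] at h
  simpa only [← dotProduct.eq_1, hu, hv, mul_one] using h

theorem map_dotProduct_stdNormalPi {u v : ι → ℝ} (hu : u ⬝ᵥ u = 1) (hv : v ⬝ᵥ v = 1) :
    (stdNormalPi ι).map (fun z => (u ⬝ᵥ z, v ⬝ᵥ z)) = normalPair (u ⬝ᵥ v) := by
  classical
  let A : (ι → ℝ) →L[ℝ] ℝ × ℝ :=
    ((dotProductBilin ℝ ℝ u).prod (dotProductBilin ℝ ℝ v)).toContinuousLinearMap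
  have hA : ⇑A = fun z => (u ⬝ᵥ z, v ⬝ᵥ z) := rfl
  rw [← hA]
  have := Measure.isProbabilityMeasure_map (μ := stdNormalPi ι) A.continuous.aemeasurable
  refine Measure.ext_of_charFunDual (funext fun L => ?_)
  rw [charFunDual_map_stdNormalPi, charFunDual_normalPair (dotProduct_sq_le_one hu hv)]
  have hsum : ∑ i, (u i * L (1, 0) + v i * L (0, 1)) ^ 2 = L (1, 0) ^ 2 * (u ⬝ᵥ u) +
      2 * (L (1, 0) * L (0, 1)) * (u ⬝ᵥ v) + L (0, 1) ^ 2 * (v ⬝ᵥ v) := by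
    simp only [dotProduct, Finset.mul_sum, ← Finset.sum_add_distrib]
    exact Finset.sum_congr rfl fun i _ => by ring
  simp only [hA, dotProduct_single_one, dual_prod_apply L (u _), hsum, hu, hv]
  ring_nf

end GaussianLaws

section BivariateNormal

lemma gaussianPDFReal_zero_one (x : ℝ) :
    gaussianPDFReal 0 1 x = (√(2 * π))⁻¹ * exp (-(x ^ 2 / 2)) := by
  simp [gaussianPDFReal, neg_div]

lemma gaussianPDFReal_zero_one_le_one (x : ℝ) : gaussianPDFReal 0 1 x ≤ 1 := by
  have h : 1 ≤ √(2 * π) := Real.one_le_sqrt.2 (by linarith [pi_gt_three])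
  rw [gaussianPDFReal_zero_one]
  exact mul_le_one₀ (inv_le_one_of_one_le₀ h) (exp_nonneg _)
    (exp_le_one_iff.2 (by linarith [sq_nonneg x]))

lemma continuous_gaussianPDFReal_zero_one : Continuous (gaussianPDFReal 0 1) := by
  simp only [funext gaussianPDFReal_zero_one]
  fun_prop

lemma stdGaussianCDF_eq_integral (x : ℝ) :
    stdGaussianCDF x = ∫ t in Set.Iic x, gaussianPDFReal 0 1 t := by
  rw [stdGaussianCDF, gaussianReal_apply_eq_integral 0 one_ne_zero, ENNReal.toReal_ofReal]
  exact integral_nonneg fun t => gaussianPDFReal_nonneg 0 1 t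

lemma hasDerivAt_stdGaussianCDF (x : ℝ) :
    HasDerivAt stdGaussianCDF (gaussianPDFReal 0 1 x) x := by
  have hint := integrable_gaussianPDFReal 0 1
  have hcont := continuous_gaussianPDFReal_zero_one
  have h (y : ℝ) : stdGaussianCDF y = stdGaussianCDF 0 + ∫ t in 0..y, gaussianPDFReal 0 1 t := by
    rw [← intervalIntegral.integral_Iic_sub_Iic hint.integrableOn hint.integrableOn,
      stdGaussianCDF_eq_integral, stdGaussianCDF_eq_integral, add_sub_cancel]
  rw [funext h]
  exact (intervalIntegral.integral_hasDerivAt_right hint.intervalIntegrable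
    (hcont.stronglyMeasurableAtFilter _ _) hcont.continuousAt).const_add _

lemma continuous_stdGaussianCDF : Continuous stdGaussianCDF :=
  continuous_iff_continuousAt.2 fun x => (hasDerivAt_stdGaussianCDF x).continuousAt

lemma norm_stdGaussianCDF_le_one (x : ℝ) : ‖stdGaussianCDF x‖ ≤ 1 := by
  rw [stdGaussianCDF, norm_of_nonneg ENNReal.toReal_nonneg]
  exact measureReal_le_one

/-- The density at `(a, b)` of the bivariate normal law with correlation `ρ`. -/
def normalPairPDF (a b ρ : ℝ) : ℝ :=
  (2 * π * √(1 - ρ ^ 2))⁻¹ *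
    exp (-((a ^ 2 + b ^ 2 - 2 * ρ * a * b) / (2 * (1 - ρ ^ 2))))

variable {ρ : ℝ}

lemma normalPairPDF_nonneg (a b ρ : ℝ) : 0 ≤ normalPairPDF a b ρ := by
  unfold normalPairPDF
  positivity

lemma normalPairPDF_eq_mul (a b : ℝ) (hρ : 0 < 1 - ρ ^ 2) :
    normalPairPDF a b ρ = gaussianPDFReal 0 1 a *
      (gaussianPDFReal 0 1 ((b - ρ * a) / √(1 - ρ ^ 2)) / √(1 - ρ ^ 2)) := by
  have hexp : -((a ^ 2 + b ^ 2 - 2 * ρ * a * b) / (2 * (1 - ρ ^ 2))) =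
      -(a ^ 2 / 2) + -(((b - ρ * a) / √(1 - ρ ^ 2)) ^ 2 / 2) := by
    rw [div_pow, sq_sqrt hρ.le]
    field_simp
    ring
  have hsqrt : 2 * π = √(2 * π) * √(2 * π) := (mul_self_sqrt (by positivity)).symm
  rw [normalPairPDF, hexp, exp_add, gaussianPDFReal_zero_one, gaussianPDFReal_zero_one]
  conv_lhs => rw [hsqrt]
  simp only [mul_inv, div_eq_mul_inv]
  ring

lemma normalPairPDF_le (a b : ℝ) (hρ : 0 < 1 - ρ ^ 2) :
    normalPairPDF a b ρ ≤ gaussianPDFReal 0 1 a / √(1 - ρ ^ 2) := by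
  rw [normalPairPDF_eq_mul a b hρ, div_eq_mul_one_div (gaussianPDFReal 0 1 a)]
  gcongr
  · exact gaussianPDFReal_nonneg 0 1 a
  · exact gaussianPDFReal_zero_one_le_one _

lemma tendsto_gaussianPDFReal_zero_one_atBot :
    Tendsto (gaussianPDFReal 0 1) atBot (𝓝 0) := by
  have h : Tendsto (fun x : ℝ => x ^ 2 / 2) atBot atTop := by
    simpa only [sq, id_eq] using
      (tendsto_id.atBot_mul_atBot₀ tendsto_id).atTop_div_const (two_pos (α := ℝ))
  simpa [funext gaussianPDFReal_zero_one] using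
    (tendsto_exp_neg_atTop_nhds_zero.comp h).const_mul (√(2 * π))⁻¹

lemma tendsto_normalPairPDF_atBot (b : ℝ) (hρ : 0 < 1 - ρ ^ 2) :
    Tendsto (fun a => normalPairPDF a b ρ) atBot (𝓝 0) := by
  refine squeeze_zero (fun a => normalPairPDF_nonneg a b ρ) (fun a => normalPairPDF_le a b hρ) ?_
  simpa using tendsto_gaussianPDFReal_zero_one_atBot.div_const √(1 - ρ ^ 2)

lemma hasDerivAt_normalPairPDF_left (a b ρ : ℝ) :
    HasDerivAt (fun x => normalPairPDF x b ρ)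
      (normalPairPDF a b ρ * ((ρ * b - a) / (1 - ρ ^ 2))) a := by
  have h : HasDerivAt (fun x => -((x ^ 2 + b ^ 2 - 2 * ρ * x * b) / (2 * (1 - ρ ^ 2))))
      ((ρ * b - a) / (1 - ρ ^ 2)) a := by
    have h' := ((((hasDerivAt_id a).pow 2).add_const (b ^ 2)).sub
      (((hasDerivAt_id a).const_mul (2 * ρ)).mul_const b)).div_const (2 * (1 - ρ ^ 2)) |>.neg
    refine h'.congr_deriv ?_
    rw [← mul_div_mul_left (ρ * b - a) _ two_ne_zero, ← neg_div]
    simp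
    ring
  refine (h.exp.const_mul _).congr_deriv ?_
  rw [normalPairPDF]
  ring

lemma hasDerivAt_pdf_mul_cdf (x b : ℝ) (hρ : 0 < 1 - ρ ^ 2) :
    HasDerivAt
      (fun r => gaussianPDFReal 0 1 x * stdGaussianCDF ((b - r * x) / √(1 - r ^ 2)))
      (normalPairPDF x b ρ * ((ρ * b - x) / (1 - ρ ^ 2))) ρ := by
  have hsqrt : HasDerivAt (fun r => √(1 - r ^ 2)) (-ρ / √(1 - ρ ^ 2)) ρ := by
    refine (((hasDerivAt_pow 2 ρ).const_sub 1).sqrt hρ.ne').congr_deriv ?_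
    field_simp
    simp
  have harg : HasDerivAt (fun r => (b - r * x) / √(1 - r ^ 2))
      ((ρ * b - x) / (1 - ρ ^ 2) / √(1 - ρ ^ 2)) ρ := by
    refine ((((hasDerivAt_id ρ).mul_const x).const_sub b).div hsqrt
      (sqrt_pos.2 hρ).ne').congr_deriv ?_
    have hs := (sqrt_pos.2 hρ).ne'
    rw [sq_sqrt hρ.le, id]
    field_simp
    rw [sq_sqrt hρ.le]
    ring
  refine (((hasDerivAt_stdGaussianCDF _).comp ρ harg).const_mul _).congr_deriv ?_
  rw [normalPairPDF_eq_mul x b hρ]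
  ring

lemma abs_deriv_pdf_mul_cdf_le {r δ : ℝ} (x b : ℝ) (hδ : 0 < δ) (hr : δ ≤ 1 - r ^ 2) :
    |normalPairPDF x b r * ((r * b - x) / (1 - r ^ 2))| ≤
      gaussianPDFReal 0 1 x * (|b| + |x|) / (√δ * δ) := by
  have hr1 : |r| ≤ 1 := abs_le_one_iff_mul_self_le_one.2 (by linarith)
  have hnum : |r * b - x| ≤ |b| + |x| := by
    refine (abs_sub _ _).trans (add_le_add_left ?_ _)
    rw [abs_mul]
    exact mul_le_of_le_one_left (abs_nonneg b) hr1
  have hpos : 0 < 1 - r ^ 2 := hδ.trans_le hr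
  have hpdf := gaussianPDFReal_nonneg 0 1 x
  rw [abs_mul, abs_div, abs_of_nonneg (normalPairPDF_nonneg x b r), abs_of_pos hpos,
    mul_div_mul_comm]
  gcongr
  exact (normalPairPDF_le x b hpos).trans (by gcongr)

lemma integrable_gaussianPDFReal_mul_add_abs (c : ℝ) :
    Integrable fun x => gaussianPDFReal 0 1 x * (c + |x|) := by
  have h : Integrable (fun x : ℝ => c + |x|) (gaussianReal 0 1) :=
    (integrable_const c).add ((memLp_id_gaussianReal 1).integrable le_rfl).abs
  rw [gaussianReal_of_var_ne_zero 0 one_ne_zero, integrable_withDensity_iff_integrable_smul'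
    (measurable_gaussianPDF 0 1) (.of_forall fun _ => gaussianPDF_lt_top)] at h
  simpa only [toReal_gaussianPDF, smul_eq_mul] using h

lemma hasDerivAt_integral_pdf_mul_cdf (a b : ℝ) (hρ : 0 < 1 - ρ ^ 2) :
    HasDerivAt (fun r => ∫ x in Set.Iic a,
        gaussianPDFReal 0 1 x * stdGaussianCDF ((b - r * x) / √(1 - r ^ 2)))
      (normalPairPDF a b ρ) ρ := by
  obtain ⟨δ, hδ, hδρ⟩ := exists_between hρ
  have hnhds : {r : ℝ | δ < 1 - r ^ 2} ∈ 𝓝 ρ :=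
    (isOpen_lt continuous_const (by fun_prop)).mem_nhds hδρ
  have hpos {r : ℝ} (hr : r ∈ {r : ℝ | δ < 1 - r ^ 2}) : 0 < 1 - r ^ 2 :=
    hδ.trans (Set.mem_ofPred.1 hr)
  have hmeas (r : ℝ) : Continuous fun x =>
      gaussianPDFReal 0 1 x * stdGaussianCDF ((b - r * x) / √(1 - r ^ 2)) :=
    continuous_gaussianPDFReal_zero_one.mul (continuous_stdGaussianCDF.comp (by fun_prop))
  have hint (r : ℝ) : Integrable (fun x =>
      gaussianPDFReal 0 1 x * stdGaussianCDF ((b - r * x) / √(1 - r ^ 2))) :=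
    (integrable_gaussianPDFReal 0 1).mul_bdd (c := 1)
      (continuous_stdGaussianCDF.comp (by fun_prop)).aestronglyMeasurable
      (.of_forall fun x => norm_stdGaussianCDF_le_one _)
  obtain ⟨hint', hderiv⟩ := hasDerivAt_integral_of_dominated_loc_of_deriv_le
    (μ := volume.restrict (Set.Iic a))
    (bound := fun x => gaussianPDFReal 0 1 x * (|b| + |x|) / (√δ * δ))
    hnhds (.of_forall fun r => (hmeas r).aestronglyMeasurable) (hint ρ).integrableOn
    (by unfold normalPairPDF; exact Continuous.aestronglyMeasurable (by fun_prop))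
    (.of_forall fun x r hr => abs_deriv_pdf_mul_cdf_le x b hδ (Set.mem_ofPred.1 hr).le)
    ((integrable_gaussianPDFReal_mul_add_abs |b|).div_const _).integrableOn
    (.of_forall fun x r hr => hasDerivAt_pdf_mul_cdf x b (hpos hr))
  refine hderiv.congr_deriv ?_
  rw [integral_Iic_of_hasDerivAt_of_tendsto' (fun x _ => hasDerivAt_normalPairPDF_left x b ρ)
    hint' (tendsto_normalPairPDF_atBot b hρ), sub_zero]

lemma measureReal_normalPair {s : Set (ℝ × ℝ)} (hs : MeasurableSet s) (ρ : ℝ) :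
    (normalPair ρ).real s = ((gaussianReal 0 1).prod (gaussianReal 0 1)).real
      ((fun p => (p.1, ρ * p.1 + √(1 - ρ ^ 2) * p.2)) ⁻¹' s) :=
  map_measureReal_apply (by fun_prop) hs

lemma normalPair_real_Iic_prod_Iic (a b : ℝ) (hρ : 0 < 1 - ρ ^ 2) :
    (normalPair ρ).real (Set.Iic a ×ˢ Set.Iic b) = ∫ x in Set.Iic a,
      gaussianPDFReal 0 1 x * stdGaussianCDF ((b - ρ * x) / √(1 - ρ ^ 2)) := by
  have hs : MeasurableSet ((fun p : ℝ × ℝ => (p.1, ρ * p.1 + √(1 - ρ ^ 2) * p.2)) ⁻¹'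
      (Set.Iic a ×ˢ Set.Iic b)) :=
    measurableSet_preimage (by fun_prop) (measurableSet_Iic.prod measurableSet_Iic)
  have hslice (x : ℝ) : Prod.mk x ⁻¹' ((fun p : ℝ × ℝ => (p.1, ρ * p.1 + √(1 - ρ ^ 2) * p.2)) ⁻¹'
      (Set.Iic a ×ˢ Set.Iic b)) =
      {y | x ≤ a ∧ y ≤ (b - ρ * x) / √(1 - ρ ^ 2)} := by
    ext y
    simp only [Set.mem_preimage, Set.mem_prod, Set.mem_Iic, Set.mem_ofPred_eq,
      le_div_iff₀ (sqrt_pos.2 hρ), le_sub_iff_add_le', mul_comm y]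
  rw [measureReal_normalPair (measurableSet_Iic.prod measurableSet_Iic), Measure.real,
    Measure.prod_apply hs, ← integral_toReal (measurable_measure_prodMk_left hs).aemeasurable
      (.of_forall fun _ => measure_lt_top _ _), integral_gaussianReal_eq_integral_smul one_ne_zero,
    ← integral_indicator measurableSet_Iic]
  refine integral_congr_ae (.of_forall fun x => ?_)
  simp only [hslice]
  by_cases hx : x ≤ a <;> simp [hx, stdGaussianCDF, Set.Iic]

lemma map_snd_normalPair (hρ : ρ ^ 2 ≤ 1) :
    (normalPair ρ).map Prod.snd = gaussianReal 0 1 := by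
  have := Measure.isProbabilityMeasure_map (μ := normalPair ρ) measurable_snd.aemeasurable
  refine Measure.ext_of_charFunDual (funext fun L => ?_)
  rw [← ContinuousLinearMap.coe_snd' (R := ℝ) (M₁ := ℝ) (M₂ := ℝ), charFunDual_map,
    charFunDual_normalPair hρ, charFunDual_stdNormal]
  simp

lemma ae_normalPair_snd_ne (hρ : ρ ^ 2 ≤ 1) (b : ℝ) : ∀ᵐ p ∂normalPair ρ, p.2 ≠ b := by
  have : NullSingletonClass (gaussianReal 0 1) :=
    nullSingletonClass_gaussianReal one_ne_zero
  have h : ∀ᵐ y ∂(normalPair ρ).map Prod.snd, y ≠ b := by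
    rw [map_snd_normalPair hρ]
    exact compl_mem_ae_iff.2 (measure_singleton b)
  exact ae_of_ae_map measurable_snd.aemeasurable h

lemma continuousAt_normalPair_real_Iic_prod_Iic (a b : ℝ) (hρ : ρ ^ 2 ≤ 1) :
    ContinuousAt (fun r => (normalPair r).real (Set.Iic a ×ˢ Set.Iic b)) ρ := by
  have hs : MeasurableSet (Set.Iic a ×ˢ Set.Iic b) := measurableSet_Iic.prod measurableSet_Iic
  have hmap (r : ℝ) : Measurable fun p : ℝ × ℝ => (p.1, r * p.1 + √(1 - r ^ 2) * p.2) := by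
    fun_prop
  simp only [measureReal_normalPair hs]
  refine (ENNReal.tendsto_toReal (measure_ne_top _ _)).comp
    (tendsto_measure_of_ae_tendsto_indicator_of_isFiniteMeasure (𝓝 ρ) (hmap ρ hs)
      (fun r => hmap r hs) ?_)
  filter_upwards [ae_of_ae_map (hmap ρ).aemeasurable (ae_normalPair_snd_ne hρ b)] with p hp
  have hcont : Tendsto (fun r => r * p.1 + √(1 - r ^ 2) * p.2) (𝓝 ρ)
      (𝓝 (ρ * p.1 + √(1 - ρ ^ 2) * p.2)) := Continuous.tendsto (by fun_prop) ρ
  simp only [Set.mem_preimage, Set.mem_prod, Set.mem_Iic]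
  rcases lt_or_gt_of_ne hp with hlt | hgt
  · filter_upwards [hcont.eventually_lt_const hlt] with r hr
    simp only [hr.le, hlt.le]
  · filter_upwards [hcont.eventually_const_lt hgt] with r hr
    simp only [hr.not_ge, hgt.not_ge]

lemma hasDerivAt_normalPair_real_Iic_prod_Iic (a b : ℝ) (hρ : 0 < 1 - ρ ^ 2) :
    HasDerivAt (fun r => (normalPair r).real (Set.Iic a ×ˢ Set.Iic b)) (normalPairPDF a b ρ) ρ := by
  refine (hasDerivAt_integral_pdf_mul_cdf a b hρ).congr_of_eventuallyEq ?_
  have hcont : ContinuousAt (fun r : ℝ => 1 - r ^ 2) ρ := by fun_prop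
  filter_upwards [hcont.eventually_const_lt hρ] with r hr
    using normalPair_real_Iic_prod_Iic a b hr

lemma normalPair_zero : normalPair 0 = (gaussianReal 0 1).prod (gaussianReal 0 1) := by
  simp [normalPair]

/-- Plackett's identity. -/
theorem normalPair_real_Iic_prod_Iic_eq_add_integral (a b : ℝ) (hρ : ρ ^ 2 ≤ 1) :
    (normalPair ρ).real (Set.Iic a ×ˢ Set.Iic b) =
      stdGaussianCDF a * stdGaussianCDF b + ∫ r in 0..ρ, normalPairPDF a b r := by
  have hsq {r : ℝ} (hr : r ∈ Set.uIcc 0 ρ) : r ^ 2 ≤ ρ ^ 2 :=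
    sq_le_sq.2 (by simpa using Set.abs_sub_left_of_mem_uIcc hr)
  have hcont : ContinuousOn (fun r => (normalPair r).real (Set.Iic a ×ˢ Set.Iic b))
      (Set.uIcc 0 ρ) := fun r hr =>
    (continuousAt_normalPair_real_Iic_prod_Iic a b ((hsq hr).trans hρ)).continuousWithinAt
  have hlt {r : ℝ} (hr : r ∈ Set.Ioo (min 0 ρ) (max 0 ρ)) : 0 < 1 - r ^ 2 := by
    obtain ⟨h₁, h₂⟩ := abs_le.1 ((sq_le_one_iff_abs_le_one ρ).1 hρ)
    exact sub_pos.2 ((sq_lt_one_iff_abs_lt_one r).2 (abs_lt.2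
      ⟨(le_min (by norm_num) h₁).trans_lt hr.1, hr.2.trans_le (max_le zero_le_one h₂)⟩))
  have hderiv (r : ℝ) (hr : r ∈ Set.Ioo (min 0 ρ) (max 0 ρ)) :=
    hasDerivAt_normalPair_real_Iic_prod_Iic a b (hlt hr)
  have hint : IntervalIntegrable (normalPairPDF a b) volume 0 ρ :=
    intervalIntegral.intervalIntegrable_deriv_of_nonneg hcont hderiv
      fun r _ => normalPairPDF_nonneg a b r
  rw [intervalIntegral.integral_eq_sub_of_hasDeriv_right hcont
    (fun r hr => (hderiv r hr).hasDerivWithinAt) hint, normalPair_zero, measureReal_prod_prod]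
  simp only [stdGaussianCDF, Measure.real]
  ring

theorem rfun_eq_normalPair_real_sub (q : ℕ → ℝ) (i j : ℕ) (hρ : ρ ^ 2 ≤ 1) :
    rfun q i j ρ = (normalPair ρ).real (Set.Iic (q i) ×ˢ Set.Iic (q j)) -
      stdGaussianCDF (q i) * stdGaussianCDF (q j) := by
  rw [normalPair_real_Iic_prod_Iic_eq_add_integral _ _ hρ, add_sub_cancel_left]
  rfl

end BivariateNormal

section SmallCorrelation

open Asymptotics

lemma integral_sub_smul_isBigO_sq {E : Type*} [NormedAddCommGroup E] [NormedSpace ℝ E]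
    [CompleteSpace E] {g : ℝ → E} (hg : ContDiffAt ℝ 1 g 0) :
    (fun x => (∫ r in 0..x, g r) - x • g 0) =O[𝓝 0] fun x => x ^ 2 := by
  obtain ⟨C, hC₀, hC⟩ := (hg.differentiableAt one_ne_zero).isBigO_sub.exists_pos
  have hcont : ∀ᶠ r in 𝓝 0, ContinuousAt g r :=
    (hg.eventually (by simp)).mono fun r hr => hr.continuousAt
  obtain ⟨ε, hε, hball⟩ := Metric.eventually_nhds_iff_ball.1 (hC.bound.and hcont)
  refine IsBigO.of_bound C ?_
  filter_upwards [Metric.ball_mem_nhds 0 hε] with x hx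
  have hsub : Set.uIcc 0 x ⊆ Metric.ball 0 ε :=
    (convex_ball _ _).ordConnected.uIcc_subset (Metric.mem_ball_self hε) hx
  have hint : IntervalIntegrable g volume 0 x := ContinuousOn.intervalIntegrable
    fun r hr => (hball r (hsub hr)).2.continuousWithinAt
  have hle : ∀ r ∈ Set.uIoc 0 x, ‖g r - g 0‖ ≤ C * ‖x‖ := fun r hr => by
    have hr' := Set.uIoc_subset_uIcc hr
    refine (hball r (hsub hr')).1.trans (mul_le_mul_of_nonneg_left ?_ hC₀.le)
    simpa using Set.abs_sub_left_of_mem_uIcc hr'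
  have h := intervalIntegral.norm_integral_le_of_norm_le_const hle
  rw [intervalIntegral.integral_sub hint intervalIntegrable_const,
    intervalIntegral.integral_const, sub_zero] at h
  simpa [sq, mul_assoc] using h

lemma contDiffAt_normalPairPDF (a b : ℝ) : ContDiffAt ℝ 1 (normalPairPDF a b) 0 := by
  unfold normalPairPDF
  fun_prop (disch := simp [pi_ne_zero])

lemma rfun_sub_mul_isBigO_sq (q : ℕ → ℝ) (i j : ℕ) :
    (fun x => rfun q i j x - x * normalPairPDF (q i) (q j) 0) =O[𝓝 0] fun x => x ^ 2 :=
  integral_sub_smul_isBigO_sq (contDiffAt_normalPairPDF (q i) (q j))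

lemma continuousWithinAt_rfun (q : ℕ → ℝ) (i j : ℕ) :
    ContinuousWithinAt (rfun q i j) (Set.Iic 1) 1 := by
  have hone : (1 : ℝ) ^ 2 ≤ 1 := (one_pow 2).le
  refine ((continuousAt_normalPair_real_Iic_prod_Iic (q i) (q j) hone).continuousWithinAt.sub
    continuousWithinAt_const).congr_of_eventuallyEq ?_ (rfun_eq_normalPair_real_sub q i j hone)
  filter_upwards [self_mem_nhdsWithin, nhdsWithin_le_nhds (Ioi_mem_nhds (neg_lt_self one_pos))]
    with r hle hgt
  exact rfun_eq_normalPair_real_sub q i j ((sq_le_one_iff_abs_le_one r).2 (abs_le.2 ⟨hgt.le, hle⟩))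

variable (q : ℕ → ℝ) {K : ℕ} (k : Fin K)

lemma exists_fkfun_sub_mul_isBigO_sq :
    ∃ c : ℝ, (fun x => fkfun q K k x - c * x) =O[𝓝 0] fun x => x ^ 2 := by
  have h := rfun_sub_mul_isBigO_sq q
  unfold fkfun
  split_ifs
  · exact ⟨_, by simpa only [mul_comm] using h 1 1⟩
  · exact ⟨_, by simpa only [mul_comm] using h (K - 1) (K - 1)⟩
  · refine ⟨normalPairPDF (q k) (q k) 0 + normalPairPDF (q (k + 1)) (q (k + 1)) 0 -
      2 * normalPairPDF (q k) (q (k + 1)) 0, (((h k k).add (h (k + 1) (k + 1))).sub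
        ((h k (k + 1)).const_mul_left 2)).congr_left fun x => ?_⟩
    ring

lemma continuousWithinAt_fkfun : ContinuousWithinAt (fkfun q K k) (Set.Iic 1) 1 := by
  have h := continuousWithinAt_rfun q
  unfold fkfun
  split_ifs
  · exact h _ _
  · exact h _ _
  · exact ((h _ _).add (h _ _)).sub ((h _ _).const_mul 2)

end SmallCorrelation

section SpectralNorm

open scoped Matrix.Norms.L2Operator

variable {ι κ : Type*} [Fintype ι] [Fintype κ] [DecidableEq κ]

lemma opNorm_eq_norm {n : ℕ} (A : Matrix (Fin n) (Fin n) ℝ) : opNorm A = ‖A‖ := rfl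

lemma sum_sq_mulVec_le (A : Matrix ι κ ℝ) (x : κ → ℝ) :
    ∑ i, (A *ᵥ x) i ^ 2 ≤ ‖A‖ ^ 2 * ∑ j, x j ^ 2 := by
  have h := pow_le_pow_left₀ (norm_nonneg _) (l2_opNorm_mulVec A (WithLp.toLp 2 x)) 2
  rwa [mul_pow, EuclideanSpace.real_norm_sq_eq, EuclideanSpace.real_norm_sq_eq] at h

lemma l2_opNorm_le_of_sum_sq_mulVec_le (A : Matrix ι κ ℝ) {c : ℝ} (hc : 0 ≤ c)
    (h : ∀ x : κ → ℝ, ∑ i, (A *ᵥ x) i ^ 2 ≤ c ^ 2 * ∑ j, x j ^ 2) : ‖A‖ ≤ c := by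
  rw [l2_opNorm_def]
  refine ContinuousLinearMap.opNorm_le_bound _ hc fun x => ?_
  refine (sq_le_sq₀ (norm_nonneg _) (by positivity)).1 ?_
  rw [mul_pow, EuclideanSpace.real_norm_sq_eq, EuclideanSpace.real_norm_sq_eq]
  exact h x.ofLp

lemma abs_dotProduct_mulVec_self_le (A : Matrix κ κ ℝ) (x : κ → ℝ) :
    |x ⬝ᵥ A *ᵥ x| ≤ ‖A‖ * ∑ i, x i ^ 2 := by
  have hx : 0 ≤ ∑ i, x i ^ 2 := Finset.sum_nonneg fun i _ => sq_nonneg _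
  refine abs_le_of_sq_le_sq ?_ (mul_nonneg (norm_nonneg A) hx)
  calc (x ⬝ᵥ A *ᵥ x) ^ 2 ≤ (∑ i, x i ^ 2) * ∑ i, (A *ᵥ x) i ^ 2 :=
        Finset.sum_mul_sq_le_sq_mul_sq Finset.univ x (A *ᵥ x)
    _ ≤ (∑ i, x i ^ 2) * (‖A‖ ^ 2 * ∑ i, x i ^ 2) :=
        mul_le_mul_of_nonneg_left (sum_sq_mulVec_le A x) hx
    _ = (‖A‖ * ∑ i, x i ^ 2) ^ 2 := by ring

lemma sum_sq_col_le_l2_opNorm_sq (A : Matrix ι κ ℝ) (j : κ) : ∑ i, A i j ^ 2 ≤ ‖A‖ ^ 2 := by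
  simpa [Pi.single_apply] using sum_sq_mulVec_le A (Pi.single j 1)

lemma sum_sq_row_le_l2_opNorm_sq (A : Matrix ι κ ℝ) (i : ι) : ∑ j, A i j ^ 2 ≤ ‖A‖ ^ 2 := by
  classical
  simpa [← l2_opNorm_conjTranspose A] using sum_sq_col_le_l2_opNorm_sq Aᴴ i

lemma abs_apply_le_l2_opNorm (A : Matrix ι κ ℝ) (i : ι) (j : κ) : |A i j| ≤ ‖A‖ :=
  abs_le_of_sq_le_sq ((Finset.single_le_sum (f := (A · j ^ 2))
    (fun _ _ => sq_nonneg _) (Finset.mem_univ i)).trans (sum_sq_col_le_l2_opNorm_sq A j))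
    (norm_nonneg A)

/-- Schur's test. -/
lemma l2_opNorm_le_of_sum_abs_le (A : Matrix ι κ ℝ) {c : ℝ} (hc : 0 ≤ c)
    (hrow : ∀ i, ∑ j, |A i j| ≤ c) (hcol : ∀ j, ∑ i, |A i j| ≤ c) : ‖A‖ ≤ c := by
  refine l2_opNorm_le_of_sum_sq_mulVec_le A hc fun x => ?_
  have hrow' (i : ι) : (A *ᵥ x) i ^ 2 ≤ c * ∑ j, |A i j| * x j ^ 2 := by
    have hCS : (∑ j, A i j * x j) ^ 2 ≤ (∑ j, |A i j|) * ∑ j, |A i j| * x j ^ 2 :=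
      Finset.sum_sq_le_sum_mul_sum_of_sq_le_mul _ (fun j _ => abs_nonneg _)
        (fun j _ => by positivity) fun j _ => by
          rw [mul_pow, ← sq_abs (A i j), sq, mul_assoc]
    exact hCS.trans (mul_le_mul_of_nonneg_right (hrow i)
      (Finset.sum_nonneg fun j _ => by positivity))
  calc ∑ i, (A *ᵥ x) i ^ 2 ≤ ∑ i, c * ∑ j, |A i j| * x j ^ 2 :=
        Finset.sum_le_sum fun i _ => hrow' i
    _ = c * ∑ j, (∑ i, |A i j|) * x j ^ 2 := by
        rw [← Finset.mul_sum, Finset.sum_comm]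
        simp_rw [Finset.sum_mul]
    _ ≤ c * ∑ j, c * x j ^ 2 := by
        gcongr with j
        exact hcol j
    _ = c ^ 2 * ∑ j, x j ^ 2 := by
        rw [← Finset.mul_sum]
        ring

lemma l2_opNorm_sub_one_le_of_posSemidef {B : Matrix κ κ ℝ} (hB : B.PosSemidef) :
    ‖B - 1‖ ≤ ‖B * B - 1‖ := by
  refine l2_opNorm_le_of_sum_sq_mulVec_le _ (norm_nonneg _) fun x =>
    le_trans ?_ (sum_sq_mulVec_le (B * B - 1) x)
  set y := (B - 1) *ᵥ x with hy
  have hfactor : (B * B - 1) *ᵥ x = B *ᵥ y + y := by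
    rw [hy, mulVec_mulVec, ← add_mulVec]
    congr 1
    noncomm_ring
  have hpos : 0 ≤ y ⬝ᵥ B *ᵥ y := by simpa using hB.dotProduct_mulVec_nonneg y
  have hexpand : ∑ i, (B *ᵥ y + y) i ^ 2 =
      ∑ i, (B *ᵥ y) i ^ 2 + 2 * (y ⬝ᵥ B *ᵥ y) + ∑ i, y i ^ 2 := by
    rw [dotProduct, Finset.mul_sum, ← Finset.sum_add_distrib, ← Finset.sum_add_distrib]
    exact Finset.sum_congr rfl fun i _ => by rw [Pi.add_apply]; ring
  have hsq : 0 ≤ ∑ i, (B *ᵥ y) i ^ 2 := Finset.sum_nonneg fun i _ => sq_nonneg _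
  rw [hfactor, hexpand]
  linarith

lemma l2_opNorm_map_sub_smul_one_le {f : ℝ → ℝ} {v c L η : ℝ} (C : Matrix κ κ ℝ) (hL : 0 ≤ L)
    (hη : 0 ≤ η) (hdiag : ∀ i, |f (C i i) - v| ≤ η)
    (hoff : ∀ i j, i ≠ j → |f (C i j) - c * C i j| ≤ L * C i j ^ 2) :
    ‖C.map f - v • 1‖ ≤ η + 2 * |c| * ‖C - 1‖ + L * ‖C - 1‖ ^ 2 := by
  set E := C - 1 with hE
  set d : κ → ℝ := fun i => f (C i i) - v - c * E i i with hd
  set R : Matrix κ κ ℝ := C.map f - v • 1 - c • E - diagonal d with hR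
  have hRle (i j : κ) : |R i j| ≤ L * E i j ^ 2 := by
    rcases eq_or_ne i j with rfl | hij
    · have hzero : R i i = 0 := by simp [hR, hd]
      rw [hzero, abs_zero]
      positivity
    · simpa [hR, hE, hij] using hoff i j hij
  have hRnorm : ‖R‖ ≤ L * ‖E‖ ^ 2 := by
    refine l2_opNorm_le_of_sum_abs_le R (by positivity) (fun i => ?_) fun j => ?_
    · refine (Finset.sum_le_sum fun j _ => hRle i j).trans ?_
      rw [← Finset.mul_sum]
      exact mul_le_mul_of_nonneg_left (sum_sq_row_le_l2_opNorm_sq E i) hL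
    · refine (Finset.sum_le_sum fun i _ => hRle i j).trans ?_
      rw [← Finset.mul_sum]
      exact mul_le_mul_of_nonneg_left (sum_sq_col_le_l2_opNorm_sq E j) hL
  have hdnorm : ‖(diagonal d : Matrix κ κ ℝ)‖ ≤ η + |c| * ‖E‖ := by
    rw [l2_opNorm_diagonal]
    refine (pi_norm_le_iff_of_nonneg (by positivity)).2 fun i => ?_
    refine (abs_sub _ _).trans (add_le_add (hdiag i) ?_)
    rw [abs_mul]
    exact mul_le_mul_of_nonneg_left (abs_apply_le_l2_opNorm E i i) (abs_nonneg c)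
  calc ‖C.map f - v • 1‖ = ‖c • E + diagonal d + R‖ := by rw [hR]; congr 1; abel
    _ ≤ |c| * ‖E‖ + (η + |c| * ‖E‖) + L * ‖E‖ ^ 2 := by
        refine (norm_add₃_le).trans (add_le_add (add_le_add ?_ hdnorm) hRnorm)
        rw [norm_smul, norm_eq_abs]
    _ = η + 2 * |c| * ‖E‖ + L * ‖E‖ ^ 2 := by ring

open Asymptotics in
theorem tendsto_l2_opNorm_map_sub_smul_one {α : Type*} {l : Filter α} {κ : α → Type*}
    [∀ a, Fintype (κ a)] [∀ a, DecidableEq (κ a)] {f : ℝ → ℝ} {c : ℝ}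
    (hzero : (fun x => f x - c * x) =O[𝓝 0] fun x => x ^ 2)
    (hone : ContinuousWithinAt f (Set.Iic 1) 1) {C : ∀ a, Matrix (κ a) (κ a) ℝ}
    (hdiag : ∀ a i, C a i i ≤ 1) (hC : Tendsto (fun a => ‖C a - 1‖) l (𝓝 0)) :
    Tendsto (fun a => ‖(C a).map f - f 1 • 1‖) l (𝓝 0) := by
  obtain ⟨L, hL, hbound⟩ := hzero.exists_pos
  obtain ⟨δ, hδ, hnear⟩ := Metric.eventually_nhds_iff.1 hbound.bound
  refine Metric.tendsto_nhds.2 fun ε hε => ?_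
  obtain ⟨δ', hδ', hnear'⟩ := Metric.continuousWithinAt_iff.1 hone (ε / 2) (half_pos hε)
  have hlim : Tendsto (fun a => ε / 2 + 2 * |c| * ‖C a - 1‖ + L * ‖C a - 1‖ ^ 2) l
      (𝓝 (ε / 2 + 2 * |c| * 0 + L * 0 ^ 2)) :=
    ((hC.const_mul _).const_add _).add ((hC.pow 2).const_mul L)
  filter_upwards [hlim.eventually_lt_const (u := ε) (by simpa using half_lt_self hε),
    hC.eventually_lt_const hδ, hC.eventually_lt_const hδ'] with a hlt hsmall hsmall'
  rw [dist_zero_right, norm_norm]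
  refine (l2_opNorm_map_sub_smul_one_le (C a) hL.le (half_pos hε).le (fun i => ?_)
    fun i j hij => ?_).trans_lt hlt
  · have hentry := abs_apply_le_l2_opNorm (C a - 1) i i
    rw [Matrix.sub_apply, one_apply_eq] at hentry
    exact (hnear' (hdiag a i) (hentry.trans_lt hsmall')).le
  · have hentry := abs_apply_le_l2_opNorm (C a - 1) i j
    simp only [Matrix.sub_apply, one_apply_ne hij, sub_zero] at hentry
    simpa using hnear (y := C a i j) (by simpa using hentry.trans_lt hsmall)

end SpectralNorm

section NoiseCovariance

lemma memLp_indicator_one {Ω : Type*} [MeasurableSpace Ω] {μ : Measure Ω} [IsFiniteMeasure μ]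
    {s : Set Ω} (hs : MeasurableSet s) (p : ℝ≥0∞) : MemLp (s.indicator (1 : Ω → ℝ)) p μ :=
  memLp_indicator_const p hs 1 (.inr (measure_ne_top μ s))

lemma covariance_indicator_one_indicator_one {Ω : Type*} [MeasurableSpace Ω] {μ : Measure Ω}
    [IsProbabilityMeasure μ] {s t : Set Ω} (hs : MeasurableSet s) (ht : MeasurableSet t) :
    cov[s.indicator 1, t.indicator 1; μ] = μ.real (s ∩ t) - μ.real s * μ.real t := by
  have hmul : s.indicator 1 * t.indicator 1 = (s ∩ t).indicator (1 : Ω → ℝ) := by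
    rw [Set.inter_indicator_one]
  rw [covariance_eq_sub (memLp_indicator_one hs 2) (memLp_indicator_one ht 2), hmul,
    integral_indicator_one hs, integral_indicator_one ht, integral_indicator_one (hs.inter ht)]

/-- The noise covariance of `h` at correlation `ρ`: the covariance of `h X` and `h Y` for a standard
bivariate normal pair `(X, Y)` with correlation `ρ`. -/
def noiseCov (h : ℝ → ℝ) (ρ : ℝ) : ℝ :=
  cov[fun p => h p.1, fun p => h p.2; normalPair ρ]

lemma map_fst_normalPair (ρ : ℝ) : (normalPair ρ).map Prod.fst = gaussianReal 0 1 := by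
  rw [normalPair, Measure.map_map measurable_fst (by fun_prop)]
  exact measurePreserving_fst.map_eq

lemma normalPair_one : normalPair 1 = (gaussianReal 0 1).map fun x => (x, x) := by
  have h : (normalPair 1) = ((gaussianReal 0 1).prod (gaussianReal 0 1)).map
      ((fun x : ℝ => (x, x)) ∘ Prod.fst) := by
    simp [normalPair, Function.comp_def]
  rw [h, ← Measure.map_map (by fun_prop) measurable_fst, measurePreserving_fst.map_eq]

lemma noiseCov_one {h : ℝ → ℝ} (hh : Measurable h) : noiseCov h 1 = Var[h; gaussianReal 0 1] := by
  have hX : Measurable fun p : ℝ × ℝ => h p.1 := hh.comp measurable_fst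
  have hY : Measurable fun p : ℝ × ℝ => h p.2 := hh.comp measurable_snd
  rw [noiseCov, normalPair_one, covariance_map_fun hX.aestronglyMeasurable
    hY.aestronglyMeasurable (by fun_prop)]
  exact covariance_self hh.aemeasurable

lemma covariance_dotProduct_stdNormalPi {ι : Type*} [Fintype ι] {h : ℝ → ℝ} (hh : Measurable h)
    {u v : ι → ℝ} (hu : u ⬝ᵥ u = 1) (hv : v ⬝ᵥ v = 1) :
    cov[fun z => h (u ⬝ᵥ z), fun z => h (v ⬝ᵥ z); stdNormalPi ι] = noiseCov h (u ⬝ᵥ v) := by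
  have hX : Measurable fun p : ℝ × ℝ => h p.1 := hh.comp measurable_fst
  have hY : Measurable fun p : ℝ × ℝ => h p.2 := hh.comp measurable_snd
  rw [noiseCov, ← map_dotProduct_stdNormalPi hu hv, covariance_map_fun hX.aestronglyMeasurable
    hY.aestronglyMeasurable (by fun_prop)]

lemma measureReal_Iic_gaussianReal (x : ℝ) :
    (gaussianReal 0 1).real (Set.Iic x) = stdGaussianCDF x := rfl

variable {ρ : ℝ}

lemma covariance_indicator_Iic_normalPair (q : ℕ → ℝ) (i j : ℕ) (hρ : ρ ^ 2 ≤ 1) :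
    cov[fun p => (Set.Iic (q i)).indicator 1 p.1, fun p => (Set.Iic (q j)).indicator 1 p.2;
      normalPair ρ] = rfun q i j ρ := by
  have h := covariance_indicator_one_indicator_one (μ := normalPair ρ)
    (measurable_fst (measurableSet_Iic (a := q i))) (measurable_snd (measurableSet_Iic (a := q j)))
  rw [← map_measureReal_apply measurable_fst measurableSet_Iic, map_fst_normalPair,
    ← map_measureReal_apply measurable_snd measurableSet_Iic, map_snd_normalPair hρ] at h
  rw [rfun_eq_normalPair_real_sub q i j hρ]
  exact h

lemma Iic_sdiff_Iic {α : Type*} [LinearOrder α] (a b : α) :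
    Set.Iic b \ Set.Iic a = Set.Ioc a b := by
  rw [Set.sdiff_eq, Set.compl_Iic, Set.inter_comm, Set.Ioi_inter_Iic]

lemma rfun_comm (q : ℕ → ℝ) (i j : ℕ) (ρ : ℝ) : rfun q i j ρ = rfun q j i ρ := by
  unfold rfun
  congr! 4
  ring

section Arms

variable {q : ℕ → ℝ} {K : ℕ}

lemma measurableSet_armSet (q : ℕ → ℝ) (k : Fin K) : MeasurableSet (armSet q K k) := by
  unfold armSet
  split_ifs
  exacts [measurableSet_Iic, measurableSet_Ioi, measurableSet_Ioc]

lemma monotone_stdGaussianCDF : Monotone stdGaussianCDF := fun _ _ hab =>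
  measureReal_mono (Set.Iic_subset_Iic.2 hab)

lemma quantile_le_quantile_succ (hq : ∀ m : ℕ, 0 < m → m < K → stdGaussianCDF (q m) = (m : ℝ) / K)
    {m : ℕ} (hm : 0 < m) (hmK : m + 1 < K) : q m ≤ q (m + 1) := by
  refine (monotone_stdGaussianCDF.reflect_lt ?_).le
  rw [hq m hm (by omega), hq (m + 1) (by omega) hmK]
  have : (0 : ℝ) < K := by exact_mod_cast (by omega : 0 < K)
  gcongr
  exact m.lt_succ_self

lemma noiseCov_indicator_Iic (q : ℕ → ℝ) (i : ℕ) (hρ : ρ ^ 2 ≤ 1) :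
    noiseCov ((Set.Iic (q i)).indicator 1) ρ = rfun q i i ρ :=
  covariance_indicator_Iic_normalPair q i i hρ

lemma noiseCov_indicator_Ioi (q : ℕ → ℝ) (i : ℕ) (hρ : ρ ^ 2 ≤ 1) :
    noiseCov ((Set.Ioi (q i)).indicator 1) ρ = rfun q i i ρ := by
  have hint {g : ℝ × ℝ → ℝ} (hg : Measurable g) :
      Integrable (fun p => (Set.Iic (q i)).indicator (1 : ℝ → ℝ) (g p)) (normalPair ρ) :=
    (integrable_const 1).indicator (hg measurableSet_Iic)
  rw [← noiseCov_indicator_Iic q i hρ, ← Set.compl_Iic, Set.indicator_compl]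
  simp only [noiseCov, Pi.sub_apply, Pi.one_apply]
  rw [covariance_const_sub_left (hint measurable_fst), covariance_const_sub_right
    (hint measurable_snd), neg_neg]

lemma noiseCov_indicator_Ioc {i j : ℕ} (hij : q i ≤ q j) (hρ : ρ ^ 2 ≤ 1) :
    noiseCov ((Set.Ioc (q i) (q j)).indicator 1) ρ =
      rfun q i i ρ + rfun q j j ρ - 2 * rfun q i j ρ := by
  have hL (m : ℕ) {g : ℝ × ℝ → ℝ} (hg : Measurable g) :
      MemLp (fun p => (Set.Iic (q m)).indicator (1 : ℝ → ℝ) (g p)) 2 (normalPair ρ) :=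
    memLp_indicator_one (hg measurableSet_Iic) 2
  have hsub (x : ℝ) : (Set.Ioc (q i) (q j)).indicator (1 : ℝ → ℝ) x =
      (Set.Iic (q j)).indicator 1 x - (Set.Iic (q i)).indicator 1 x := by
    rw [← Iic_sdiff_Iic, Set.indicator_sdiff (Set.Iic_subset_Iic.2 hij), Pi.sub_apply]
  simp_rw [noiseCov, hsub]
  rw [covariance_fun_sub_fun_sub (hL j measurable_fst) (hL i measurable_fst)
    (hL j measurable_snd) (hL i measurable_snd)]
  simp only [covariance_indicator_Iic_normalPair q _ _ hρ, rfun_comm q j i]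
  ring

theorem noiseCov_indicator_armSet
    (hq : ∀ m : ℕ, 0 < m → m < K → stdGaussianCDF (q m) = (m : ℝ) / K) (k : Fin K)
    (hρ : ρ ^ 2 ≤ 1) : noiseCov ((armSet q K k).indicator 1) ρ = fkfun q K k ρ := by
  unfold armSet fkfun
  split_ifs
  · exact noiseCov_indicator_Iic q 1 hρ
  · exact noiseCov_indicator_Ioi q (K - 1) hρ
  · exact noiseCov_indicator_Ioc (quantile_le_quantile_succ hq (by omega) (by omega)) hρ

lemma gaussianReal_real_armSet (hK : 2 ≤ K)
    (hq : ∀ m : ℕ, 0 < m → m < K → stdGaussianCDF (q m) = (m : ℝ) / K) (k : Fin K) :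
    (gaussianReal 0 1).real (armSet q K k) = (K : ℝ)⁻¹ := by
  have hK₀ : (K : ℝ) ≠ 0 := by positivity
  unfold armSet
  split_ifs
  · rw [measureReal_Iic_gaussianReal, hq 1 one_pos hK, Nat.cast_one, one_div]
  · rw [← Set.compl_Iic, probReal_compl_eq_one_sub measurableSet_Iic, measureReal_Iic_gaussianReal,
      hq (K - 1) (by omega) (by omega), Nat.cast_sub (by omega)]
    field_simp
    ring
  · have hle := quantile_le_quantile_succ hq (m := k) (by omega) (by omega)
    rw [← Iic_sdiff_Iic, measureReal_sdiff (Set.Iic_subset_Iic.2 hle) measurableSet_Iic]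
    simp only [measureReal_Iic_gaussianReal]
    rw [hq k (by omega) (by omega), hq (k + 1) (by omega) (by omega), Nat.cast_succ]
    field_simp
    ring

lemma variance_indicator_armSet (hK : 2 ≤ K)
    (hq : ∀ m : ℕ, 0 < m → m < K → stdGaussianCDF (q m) = (m : ℝ) / K) (k : Fin K) :
    Var[(armSet q K k).indicator 1; gaussianReal 0 1] = ((K : ℝ) - 1) / K ^ 2 := by
  have hK₀ : (K : ℝ) ≠ 0 := by positivity
  have hs := measurableSet_armSet q k
  rw [← covariance_self (measurable_one.indicator hs).aemeasurable,
    covariance_indicator_one_indicator_one hs hs, Set.inter_self, gaussianReal_real_armSet hK hq]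
  field_simp

open Asymptotics in
lemma exists_noiseCov_indicator_armSet_sub_mul_isBigO_sq
    (hq : ∀ m : ℕ, 0 < m → m < K → stdGaussianCDF (q m) = (m : ℝ) / K) (k : Fin K) :
    ∃ c, (fun ρ => noiseCov ((armSet q K k).indicator 1) ρ - c * ρ) =O[𝓝 0] fun ρ => ρ ^ 2 := by
  obtain ⟨c, hc⟩ := exists_fkfun_sub_mul_isBigO_sq q k
  refine ⟨c, hc.congr' ?_ .rfl⟩
  filter_upwards [Icc_mem_nhds (show (-1 : ℝ) < 0 by norm_num) one_pos] with ρ hρ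
  rw [noiseCov_indicator_armSet hq k ((sq_le_one_iff_abs_le_one ρ).2 (abs_le.2 hρ))]

lemma continuousWithinAt_noiseCov_indicator_armSet
    (hq : ∀ m : ℕ, 0 < m → m < K → stdGaussianCDF (q m) = (m : ℝ) / K) (k : Fin K) :
    ContinuousWithinAt (noiseCov ((armSet q K k).indicator 1)) (Set.Iic 1) 1 := by
  refine (continuousWithinAt_fkfun q k).congr_of_eventuallyEq ?_
    (noiseCov_indicator_armSet hq k (by norm_num))
  filter_upwards [self_mem_nhdsWithin,
    mem_nhdsWithin_of_mem_nhds (Ici_mem_nhds (show (-1 : ℝ) < 1 by norm_num))] with ρ hle hge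
  exact noiseCov_indicator_armSet hq k ((sq_le_one_iff_abs_le_one ρ).2 (abs_le.2 ⟨hge, hle⟩))

end Arms

end NoiseCovariance

/-- The linear statistic `∑ i, w i (h (x i) - 𝔼 h(Z))`, with `Z` standard normal. -/
def centeredSum {ι : Type*} [Fintype ι] (h : ℝ → ℝ) (w x : ι → ℝ) : ℝ :=
  ∑ i, w i * (h (x i) - ∫ y, h y ∂gaussianReal 0 1)

section Coupling

variable {ι κ : Type*} [Fintype ι] [Fintype κ] {h : ℝ → ℝ}

lemma measurable_centeredSum (hh : Measurable h) (w : ι → ℝ) : Measurable (centeredSum h w) := by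
  unfold centeredSum
  fun_prop

lemma measurePreserving_dotProduct_stdNormalPi {u : κ → ℝ} (hu : u ⬝ᵥ u = 1) :
    MeasurePreserving (u ⬝ᵥ ·) (stdNormalPi κ) (gaussianReal 0 1) := by
  refine ⟨by fun_prop, ?_⟩
  rw [← map_fst_normalPair (u ⬝ᵥ u), ← map_dotProduct_stdNormalPi hu hu,
    Measure.map_map measurable_fst (by fun_prop)]
  rfl

lemma memLp_comp_dotProduct (hL : MemLp h 2 (gaussianReal 0 1)) {u : κ → ℝ} (hu : u ⬝ᵥ u = 1) :
    MemLp (fun z => h (u ⬝ᵥ z)) 2 (stdNormalPi κ) :=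
  hL.comp_measurePreserving (measurePreserving_dotProduct_stdNormalPi hu)

lemma integral_comp_dotProduct (hh : Measurable h) {u : κ → ℝ} (hu : u ⬝ᵥ u = 1) :
    ∫ z, h (u ⬝ᵥ z) ∂stdNormalPi κ = ∫ y, h y ∂gaussianReal 0 1 := by
  have hmp := measurePreserving_dotProduct_stdNormalPi hu
  rw [← hmp.map_eq, integral_map hmp.aemeasurable hh.aestronglyMeasurable]

lemma one_dotProduct_one_self [DecidableEq ι] (i : ι) :
    (1 : Matrix ι ι ℝ) i ⬝ᵥ (1 : Matrix ι ι ℝ) i = 1 := by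
  simp [dotProduct, one_apply]

lemma memLp_centeredSum_mulVec (hL : MemLp h 2 (gaussianReal 0 1)) (w : ι → ℝ) {B : Matrix ι κ ℝ}
    (hB : ∀ i, B i ⬝ᵥ B i = 1) :
    MemLp (fun z => centeredSum h w (B *ᵥ z)) 2 (stdNormalPi κ) :=
  memLp_finsetSum _ fun i _ =>
    ((memLp_comp_dotProduct hL (hB i)).sub (memLp_const _)).const_mul (w i)

lemma integral_sq_centeredSum_sub (hh : Measurable h) (hL : MemLp h 2 (gaussianReal 0 1))
    (w : ι → ℝ) {B C : Matrix ι κ ℝ} (hB : ∀ i, B i ⬝ᵥ B i = 1) (hC : ∀ i, C i ⬝ᵥ C i = 1) :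
    ∫ z, (centeredSum h w (B *ᵥ z) - centeredSum h w (C *ᵥ z)) ^ 2 ∂stdNormalPi κ =
      w ⬝ᵥ ((B * Bᵀ).map (noiseCov h) - (B * Cᵀ).map (noiseCov h) -
        (C * Bᵀ).map (noiseCov h) + (C * Cᵀ).map (noiseCov h)) *ᵥ w := by
  have hLB (i : ι) := memLp_comp_dotProduct hL (hB i)
  have hLC (i : ι) := memLp_comp_dotProduct hL (hC i)
  have hLsum (i : ι) : MemLp (fun z => w i * (h (B i ⬝ᵥ z) - h (C i ⬝ᵥ z))) 2 (stdNormalPi κ) :=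
    ((hLB i).sub (hLC i)).const_mul (w i)
  have hsub (z : κ → ℝ) : centeredSum h w (B *ᵥ z) - centeredSum h w (C *ᵥ z) =
      ∑ i, w i * (h (B i ⬝ᵥ z) - h (C i ⬝ᵥ z)) := by
    simp only [centeredSum, ← Finset.sum_sub_distrib, ← mul_sub, sub_sub_sub_cancel_right]
    rfl
  have hmean : ∫ z, ∑ i, w i * (h (B i ⬝ᵥ z) - h (C i ⬝ᵥ z)) ∂stdNormalPi κ = 0 := by
    rw [integral_finsetSum _ fun i _ => (hLsum i).integrable one_le_two]
    refine Finset.sum_eq_zero fun i _ => ?_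
    rw [integral_const_mul, integral_sub ((hLB i).integrable one_le_two)
      ((hLC i).integrable one_le_two), integral_comp_dotProduct hh (hB i),
      integral_comp_dotProduct hh (hC i), sub_self, mul_zero]
  have hcov (i j : ι) : cov[fun z => h (B i ⬝ᵥ z) - h (C i ⬝ᵥ z),
      fun z => h (B j ⬝ᵥ z) - h (C j ⬝ᵥ z); stdNormalPi κ] = ((B * Bᵀ).map (noiseCov h) -
        (B * Cᵀ).map (noiseCov h) - (C * Bᵀ).map (noiseCov h) + (C * Cᵀ).map (noiseCov h)) i j := by
    rw [covariance_fun_sub_fun_sub (hLB i) (hLC i) (hLB j) (hLC j)]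
    simp only [covariance_dotProduct_stdNormalPi hh, hB, hC]
    rfl
  have hmeas := (memLp_finsetSum Finset.univ fun i _ => hLsum i).aestronglyMeasurable.aemeasurable
  simp_rw [hsub]
  rw [← variance_of_integral_eq_zero hmeas hmean, ← covariance_self hmeas,
    covariance_fun_sum_fun_sum hLsum hLsum]
  simp only [covariance_const_mul_left, covariance_const_mul_right, hcov]
  simp only [dotProduct, mulVec, Finset.mul_sum]
  exact Finset.sum_congr rfl fun i _ => Finset.sum_congr rfl fun j _ => by ring

open scoped Matrix.Norms.L2Operator

lemma integral_sq_centeredSum_sub_le [DecidableEq ι] (hh : Measurable h)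
    (hL : MemLp h 2 (gaussianReal 0 1)) (v : ℝ) (w : ι → ℝ) {B C : Matrix ι κ ℝ}
    (hB : ∀ i, B i ⬝ᵥ B i = 1) (hC : ∀ i, C i ⬝ᵥ C i = 1) :
    ∫ z, (centeredSum h w (B *ᵥ z) - centeredSum h w (C *ᵥ z)) ^ 2 ∂stdNormalPi κ ≤
      (‖(B * Bᵀ).map (noiseCov h) - v • 1‖ + ‖(B * Cᵀ).map (noiseCov h) - v • 1‖ +
        ‖(C * Bᵀ).map (noiseCov h) - v • 1‖ + ‖(C * Cᵀ).map (noiseCov h) - v • 1‖) *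
        ∑ i, w i ^ 2 := by
  rw [integral_sq_centeredSum_sub hh hL w hB hC]
  refine (le_abs_self _).trans ((abs_dotProduct_mulVec_self_le _ w).trans ?_)
  gcongr
  set M₁ := (B * Bᵀ).map (noiseCov h)
  set M₂ := (B * Cᵀ).map (noiseCov h)
  set M₃ := (C * Bᵀ).map (noiseCov h)
  set M₄ := (C * Cᵀ).map (noiseCov h)
  calc ‖M₁ - M₂ - M₃ + M₄‖
      = ‖(M₁ - v • 1) - (M₂ - v • 1) - (M₃ - v • 1) + (M₄ - v • 1)‖ := by congr 1; abel
    _ ≤ ‖M₁ - v • 1‖ + ‖M₂ - v • 1‖ + ‖M₃ - v • 1‖ + ‖M₄ - v • 1‖ :=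
      norm_add_le_of_le (norm_sub_le_of_le (norm_sub_le _ _) le_rfl) le_rfl

lemma exists_posSemidef_mul_self_eq {S : Matrix ι ι ℝ} (hS : S.PosSemidef) :
    ∃ B : Matrix ι ι ℝ, B.PosSemidef ∧ B * B = S := by
  classical
  open scoped MatrixOrder in
  exact ⟨CFC.sqrt S, (CFC.sqrt_nonneg S).posSemidef, CFC.sqrt_mul_sqrt_self S hS.nonneg⟩

end Coupling

section VanishingPerturbation

open scoped Matrix.Norms.L2Operator

variable {α : Type*} {l : Filter α} {ι : α → Type*} [∀ a, Fintype (ι a)]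

lemma tendsto_sum_sq_of_tendsto_sum_sq_sub {x y : ∀ a, ι a → ℝ} {s : ℝ}
    (hxy : Tendsto (fun a => ∑ i, (x a i - y a i) ^ 2) l (𝓝 0))
    (hx : Tendsto (fun a => ∑ i, x a i ^ 2) l (𝓝 s)) :
    Tendsto (fun a => ∑ i, y a i ^ 2) l (𝓝 s) := by
  have hcross : Tendsto (fun a => ∑ i, x a i * (x a i - y a i)) l (𝓝 0) :=
    squeeze_zero_norm (fun a => Real.abs_le_sqrt (Finset.sum_mul_sq_le_sq_mul_sq _ _ _))
      (by simpa using (hx.mul hxy).sqrt)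
  have hexpand (a) : ∑ i, y a i ^ 2 =
      ∑ i, x a i ^ 2 - 2 * ∑ i, x a i * (x a i - y a i) + ∑ i, (x a i - y a i) ^ 2 := by
    rw [Finset.mul_sum, ← Finset.sum_sub_distrib, ← Finset.sum_add_distrib]
    exact Finset.sum_congr rfl fun i _ => by ring
  simpa [hexpand] using (hx.sub (hcross.const_mul 2)).add hxy

lemma eventually_abs_lt_of_tendsto_sum_sq_sub {x y : ∀ a, ι a → ℝ}
    (hxy : Tendsto (fun a => ∑ i, (x a i - y a i) ^ 2) l (𝓝 0))
    (hx : ∀ ε > 0, ∀ᶠ a in l, ∀ i, |x a i| < ε) :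
    ∀ ε > 0, ∀ᶠ a in l, ∀ i, |y a i| < ε := by
  intro ε hε
  filter_upwards [hx (ε / 2) (half_pos hε),
    hxy.eventually_lt_const (show 0 < (ε / 2) ^ 2 by positivity)] with a hxa hxya i
  have hle : (x a i - y a i) ^ 2 ≤ ∑ j, (x a j - y a j) ^ 2 :=
    Finset.single_le_sum (f := fun j => (x a j - y a j) ^ 2) (fun _ _ => sq_nonneg _)
      (Finset.mem_univ i)
  have hdist : |x a i - y a i| < ε / 2 := abs_lt_of_sq_lt_sq (hle.trans_lt hxya) (half_pos hε).le
  linarith [abs_sub_abs_le_abs_sub (y a i) (x a i), abs_sub_comm (x a i) (y a i), hxa i]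

variable [∀ a, DecidableEq (ι a)]

lemma tendsto_sum_sq_mulVec_sub {P : ∀ a, Matrix (ι a) (ι a) ℝ} {w : ∀ a, ι a → ℝ} {M : ℝ}
    (hP : Tendsto (fun a => ‖P a - 1‖) l (𝓝 0)) (hw : ∀ a, ∑ i, w a i ^ 2 ≤ M) :
    Tendsto (fun a => ∑ i, ((P a *ᵥ w a) i - w a i) ^ 2) l (𝓝 0) := by
  refine squeeze_zero (fun a => Finset.sum_nonneg fun i _ => sq_nonneg _) (fun a => ?_)
    (g := fun a => ‖P a - 1‖ ^ 2 * M) (by simpa using (hP.pow 2).mul_const M)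
  have h := sum_sq_mulVec_le (P a - 1) (w a)
  rw [sub_mulVec, one_mulVec] at h
  exact h.trans (mul_le_mul_of_nonneg_left (hw a) (sq_nonneg _))

lemma tendsto_l2_opNorm_inv_sqrt_smul_sub_one {Q : ∀ a, Matrix (ι a) (ι a) ℝ} {v : ℝ} (hv : 0 < v)
    (hQ : ∀ a, (Q a).PosSemidef) (hQv : Tendsto (fun a => ‖Q a * Q a - v • 1‖) l (𝓝 0)) :
    Tendsto (fun a => ‖(√v)⁻¹ • Q a - 1‖) l (𝓝 0) := by
  refine squeeze_zero (fun a => norm_nonneg _) (fun a => ?_)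
    (g := fun a => v⁻¹ * ‖Q a * Q a - v • 1‖) (by simpa using hQv.const_mul v⁻¹)
  refine (l2_opNorm_sub_one_le_of_posSemidef ((hQ a).smul (by positivity))).trans_eq ?_
  have hscale : (√v)⁻¹ • Q a * (√v)⁻¹ • Q a - 1 = v⁻¹ • (Q a * Q a - v • 1) := by
    rw [smul_mul_smul_comm, ← mul_inv, Real.mul_self_sqrt hv.le, smul_sub, smul_smul,
      inv_mul_cancel₀ hv.ne', one_smul]
  rw [hscale, norm_smul, norm_of_nonneg (by positivity)]

open Asymptotics in
theorem tendsto_integral_sq_centeredSum_mulVec_sub {h : ℝ → ℝ} {c : ℝ} (hh : Measurable h)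
    (hL : MemLp h 2 (gaussianReal 0 1))
    (hzero : (fun ρ => noiseCov h ρ - c * ρ) =O[𝓝 0] fun ρ => ρ ^ 2)
    (hone : ContinuousWithinAt (noiseCov h) (Set.Iic 1) 1) {B : ∀ a, Matrix (ι a) (ι a) ℝ}
    (hB : ∀ a, (B a).PosSemidef) (hrow : ∀ a i, B a i ⬝ᵥ B a i = 1)
    (hBB : Tendsto (fun a => ‖B a * B a - 1‖) l (𝓝 0)) {w : ∀ a, ι a → ℝ} {s : ℝ}
    (hw : Tendsto (fun a => ∑ i, w a i ^ 2) l (𝓝 s)) :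
    Tendsto (fun a => ∫ z, (centeredSum h (w a) (B a *ᵥ z) - centeredSum h (w a) z) ^ 2
      ∂stdNormalPi (ι a)) l (𝓝 0) := by
  have hBt (a) : (B a)ᵀ = B a := by simpa using (hB a).isHermitian.eq
  have hB_one : Tendsto (fun a => ‖B a - 1‖) l (𝓝 0) :=
    squeeze_zero (fun _ => norm_nonneg _) (fun a => l2_opNorm_sub_one_le_of_posSemidef (hB a)) hBB
  have hlim {C : ∀ a, Matrix (ι a) (ι a) ℝ} (hdiag : ∀ a i, C a i i ≤ 1)
      (hC : Tendsto (fun a => ‖C a - 1‖) l (𝓝 0)) :=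
    tendsto_l2_opNorm_map_sub_smul_one hzero hone hdiag hC
  have hdiag (a) (i : ι a) : (B a * B a) i i ≤ 1 := by
    nth_rw 2 [← hBt]
    exact (hrow a i).le
  have hdiag' (a) (i : ι a) : B a i i ≤ 1 := by
    refine (abs_le_of_sq_le_sq' ?_ zero_le_one).2
    rw [one_pow, ← hrow a i, sq]
    exact Finset.single_le_sum (f := fun j => B a i j * B a i j) (fun j _ => mul_self_nonneg _)
      (Finset.mem_univ i)
  have h₁ := hlim hdiag hBB
  have h₂ := hlim hdiag' hB_one
  have h₃ := hlim (C := fun a => 1) (fun a i => (one_apply_eq i).le)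
    (by simpa using tendsto_const_nhds)
  refine squeeze_zero (fun a => integral_nonneg fun z => sq_nonneg _) (fun a => ?_) (by
    simpa using (((h₁.add h₂).add h₂).add h₃).mul hw)
  have hle := integral_sq_centeredSum_sub_le hh hL (noiseCov h 1) (w a) (hrow a)
    one_dotProduct_one_self
  simp only [one_mulVec, transpose_one, mul_one, one_mul, hBt] at hle
  exact hle

end VanishingPerturbation

lemma norm_prod_sub_prod_le {ι R : Type*} [NormedCommRing R] [NormOneClass R] (s : Finset ι)
    {f g : ι → R} (hf : ∀ i ∈ s, ‖f i‖ ≤ 1) (hg : ∀ i ∈ s, ‖g i‖ ≤ 1) :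
    ‖∏ i ∈ s, f i - ∏ i ∈ s, g i‖ ≤ ∑ i ∈ s, ‖f i - g i‖ := by
  classical
  induction s using Finset.induction_on with
  | empty => simp
  | insert a s ha ih =>
    simp only [Finset.forall_mem_insert] at hf hg
    have hgs : ‖∏ i ∈ s, g i‖ ≤ 1 :=
      (Finset.norm_prod_le s g).trans (Finset.prod_le_one (fun _ _ => norm_nonneg _) hg.2)
    rw [Finset.prod_insert ha, Finset.prod_insert ha, Finset.sum_insert ha]
    calc ‖f a * ∏ i ∈ s, f i - g a * ∏ i ∈ s, g i‖
        = ‖(f a - g a) * ∏ i ∈ s, g i + f a * (∏ i ∈ s, f i - ∏ i ∈ s, g i)‖ := by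
          congr 1; ring
      _ ≤ ‖f a - g a‖ * ‖∏ i ∈ s, g i‖ + ‖f a‖ * ‖∏ i ∈ s, f i - ∏ i ∈ s, g i‖ :=
          norm_add_le_of_le (norm_mul_le _ _) (norm_mul_le _ _)
      _ ≤ ‖f a - g a‖ * 1 + 1 * ∑ i ∈ s, ‖f i - g i‖ := by
          gcongr
          exacts [hf.1, ih hf.2 hg.2]
      _ = _ := by rw [mul_one, one_mul]

open Asymptotics in
lemma prod_sub_prod_isLittleO_sum_sq {α R : Type*} {l : Filter α} {ι : α → Type*}
    [∀ a, Fintype (ι a)] [NormedCommRing R] [NormOneClass R] {φ ψ : ℝ → R}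
    (hφ : ∀ t, ‖φ t‖ ≤ 1) (hψ : ∀ t, ‖ψ t‖ ≤ 1) (hφψ : (φ - ψ) =o[𝓝 0] fun t => t ^ 2)
    {w : ∀ a, ι a → ℝ} (hw : ∀ ε > 0, ∀ᶠ a in l, ∀ i, |w a i| < ε) :
    (fun a => ∏ i, φ (w a i) - ∏ i, ψ (w a i)) =o[l] fun a => ∑ i, w a i ^ 2 := by
  refine isLittleO_iff.2 fun c hc => ?_
  obtain ⟨δ, hδ, hlocal⟩ := Metric.eventually_nhds_iff.1 (hφψ.def hc)
  filter_upwards [hw δ hδ] with a ha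
  calc ‖∏ i, φ (w a i) - ∏ i, ψ (w a i)‖
      ≤ ∑ i, ‖φ (w a i) - ψ (w a i)‖ :=
        norm_prod_sub_prod_le _ (fun i _ => hφ _) fun i _ => hψ _
    _ ≤ ∑ i, c * ‖w a i ^ 2‖ := Finset.sum_le_sum fun i _ => hlocal (by simpa using ha i)
    _ = c * ‖∑ i, w a i ^ 2‖ := by
        rw [norm_of_nonneg (Finset.sum_nonneg fun i _ => sq_nonneg (w a i)), Finset.mul_sum]
        simp only [norm_of_nonneg (sq_nonneg _)]

section CharFun

variable {Ω : Type*} [MeasurableSpace Ω] {μ : Measure Ω}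

open Asymptotics in
lemma charFun_sub_charFun_isLittleO_pow {μ ν : Measure ℝ} [IsFiniteMeasure μ] [IsFiniteMeasure ν]
    {n : ℕ} (hμ : MemLp id n μ) (hν : MemLp id n ν)
    (hmoments : ∀ k ≤ n, ∫ x, x ^ k ∂μ = ∫ x, x ^ k ∂ν) :
    (charFun μ - charFun ν) =o[𝓝 0] fun t => t ^ n := by
  have htaylor := (taylor_isLittleO_univ (x₀ := 0) (contDiff_charFun hμ)).sub
    (taylor_isLittleO_univ (x₀ := 0) (contDiff_charFun hν))
  simp only [sub_zero] at htaylor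
  refine htaylor.congr_left fun t => ?_
  have heq : taylorWithinEval (charFun μ) n Set.univ 0 t =
      taylorWithinEval (charFun ν) n Set.univ 0 t := by
    rw [taylorWithinEval_charFun_zero hμ, taylorWithinEval_charFun_zero hν]
    exact Finset.sum_congr rfl fun k hk => by rw [hmoments k (Finset.mem_range_succ_iff.1 hk)]
  rw [heq, sub_sub_sub_cancel_right, Pi.sub_apply]

lemma integral_abs_le_sqrt_integral_sq [IsProbabilityMeasure μ] {U : Ω → ℝ} (hU : MemLp U 2 μ) :
    ∫ ω, |U ω| ∂μ ≤ √(∫ ω, U ω ^ 2 ∂μ) := by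
  refine Real.le_sqrt_of_sq_le (sub_nonneg.1 ?_)
  have hvar := variance_nonneg |U| μ
  rw [variance_eq_sub hU.abs] at hvar
  simpa only [Pi.pow_apply, Pi.abs_apply, sq_abs] using hvar

lemma norm_exp_ofReal_mul_I_sub_le (x y : ℝ) :
    ‖Complex.exp (x * Complex.I) - Complex.exp (y * Complex.I)‖ ≤ |x - y| := by
  have hfactor : Complex.exp (x * Complex.I) - Complex.exp (y * Complex.I) =
      Complex.exp (y * Complex.I) * (Complex.exp (Complex.I * ((x - y : ℝ) : ℂ)) - 1) := by
    rw [mul_sub, ← Complex.exp_add, mul_one]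
    push_cast
    ring_nf
  rw [hfactor, norm_mul, Complex.norm_exp_ofReal_mul_I, one_mul]
  exact Real.norm_exp_I_mul_ofReal_sub_one_le

lemma norm_charFun_map_sub_charFun_map_le [IsProbabilityMeasure μ] {U V : Ω → ℝ}
    (hU : MemLp U 2 μ) (hV : MemLp V 2 μ) (t : ℝ) :
    ‖charFun (μ.map U) t - charFun (μ.map V) t‖ ≤ |t| * √(∫ ω, (U ω - V ω) ^ 2 ∂μ) := by
  have hchar {W : Ω → ℝ} (hW : MemLp W 2 μ) :
      charFun (μ.map W) t = ∫ ω, Complex.exp ((t * W ω : ℝ) * Complex.I) ∂μ := by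
    rw [charFun_apply_real, integral_map hW.aestronglyMeasurable.aemeasurable (by fun_prop)]
    simp only [Complex.ofReal_mul]
  have hint {W : Ω → ℝ} (hW : MemLp W 2 μ) :
      Integrable (fun ω => Complex.exp ((t * W ω : ℝ) * Complex.I)) μ := by
    refine .of_bound (C := 1) ?_ (ae_of_all _ fun ω => (Complex.norm_exp_ofReal_mul_I _).le)
    have hcont : Continuous fun x : ℝ => Complex.exp ((t * x : ℝ) * Complex.I) := by fun_prop
    exact hcont.comp_aestronglyMeasurable hW.aestronglyMeasurable
  have hUV : MemLp (fun ω => U ω - V ω) 2 μ := hU.sub hV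
  rw [hchar hU, hchar hV, ← integral_sub (hint hU) (hint hV)]
  calc _ ≤ ∫ ω, |t| * |U ω - V ω| ∂μ := by
        refine norm_integral_le_of_norm_le ((hUV.integrable one_le_two).abs.const_mul _)
          (ae_of_all _ fun ω => (norm_exp_ofReal_mul_I_sub_le _ _).trans_eq ?_)
        rw [← mul_sub, abs_mul]
    _ = |t| * ∫ ω, |U ω - V ω| ∂μ := integral_const_mul _ _
    _ ≤ _ := by gcongr; exact integral_abs_le_sqrt_integral_sq hUV

lemma charFun_map_sum_mul_pi [SigmaFinite μ] {ι : Type*} [Fintype ι] {g : Ω → ℝ}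
    (hg : Measurable g) (w : ι → ℝ) (t : ℝ) :
    charFun ((Measure.pi fun _ : ι => μ).map fun x => ∑ i, w i * g (x i)) t =
      ∏ i, charFun (μ.map g) (w i * t) := by
  have hsum : Measurable fun x : ι → Ω => ∑ i, w i * g (x i) :=
    Finset.measurable_fun_sum _ fun i _ => (hg.comp (measurable_pi_apply i)).const_mul (w i)
  have hchar (i : ι) : charFun (μ.map g) (w i * t) =
      ∫ ω, Complex.exp (t * (w i * g ω : ℝ) * Complex.I) ∂μ := by
    rw [charFun_apply_real, integral_map hg.aemeasurable (by fun_prop)]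
    refine integral_congr_ae (ae_of_all _ fun ω => ?_)
    push_cast
    ring_nf
  simp only [hchar]
  rw [charFun_apply_real, integral_map hsum.aemeasurable (by fun_prop),
    ← integral_fintype_prod_eq_prod]
  simp only [Complex.ofReal_sum, Finset.mul_sum, Finset.sum_mul, Complex.exp_sum]

end CharFun

lemma prod_charFun_gaussianReal_zero {ι : Type*} [Fintype ι] (v : ℝ≥0) (w : ι → ℝ) (t : ℝ) :
    ∏ i, charFun (gaussianReal 0 v) (w i * t) =
      Complex.exp (-((v * ∑ i, w i ^ 2 : ℝ) * t ^ 2 / 2)) := by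
  simp only [charFun_gaussianReal, ← Complex.exp_sum]
  push_cast
  simp only [mul_zero, zero_mul, zero_sub, Finset.sum_neg_distrib, Finset.mul_sum, Finset.sum_mul,
    Finset.sum_div, mul_pow, mul_assoc]

section CentralLimit

variable {α : Type*} {l : Filter α} {ι : α → Type*} [∀ a, Fintype (ι a)]

open Asymptotics in
lemma charFun_map_sub_charFun_gaussianReal_isLittleO_sq {Ω : Type*} [MeasurableSpace Ω]
    {μ : Measure Ω} [IsProbabilityMeasure μ] {g : Ω → ℝ} (hg : MemLp g 2 μ)
    (hmean : ∫ ω, g ω ∂μ = 0) :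
    (charFun (μ.map g) - charFun (gaussianReal 0 Var[g; μ].toNNReal)) =o[𝓝 0] fun t => t ^ 2 := by
  have hmeas : AEMeasurable g μ := hg.aestronglyMeasurable.aemeasurable
  have : IsProbabilityMeasure (μ.map g) := Measure.isProbabilityMeasure_map hmeas
  have hgL : MemLp id ((2 : ℕ) : ℝ≥0∞) (μ.map g) :=
    (memLp_map_measure_iff aestronglyMeasurable_id hmeas).2 hg
  refine charFun_sub_charFun_isLittleO_pow hgL (memLp_id_gaussianReal' _ (by simp)) fun k hk => ?_
  rw [integral_map hmeas (by fun_prop)]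
  interval_cases k
  · simp
  · simpa using hmean
  · rw [← variance_of_integral_eq_zero hmeas hmean, ← variance_of_integral_eq_zero (by fun_prop)
      integral_id_gaussianReal, variance_fun_id_gaussianReal,
      Real.coe_toNNReal _ (variance_nonneg g μ)]

lemma tendsto_charFun_map_sum_mul_pi {Ω : Type*} [MeasurableSpace Ω] {μ : Measure Ω}
    [IsProbabilityMeasure μ] {g : Ω → ℝ} (hg : Measurable g) (hgL : MemLp g 2 μ)
    (hmean : ∫ ω, g ω ∂μ = 0) {w : ∀ a, ι a → ℝ} (hmax : ∀ ε > 0, ∀ᶠ a in l, ∀ i, |w a i| < ε)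
    {s : ℝ} (hsum : Tendsto (fun a => ∑ i, w a i ^ 2) l (𝓝 s)) {v : ℝ≥0}
    (hv : Var[g; μ] * s = v) (t : ℝ) :
    Tendsto (fun a => charFun ((Measure.pi fun _ : ι a => μ).map fun x => ∑ i, w a i * g (x i)) t) l
      (𝓝 (charFun (gaussianReal 0 v) t)) := by
  have : IsProbabilityMeasure (μ.map g) := Measure.isProbabilityMeasure_map hg.aemeasurable
  have hsum_t : Tendsto (fun a => ∑ i, (w a i * t) ^ 2) l (𝓝 (s * t ^ 2)) := by
    simpa only [mul_pow, Finset.sum_mul] using hsum.mul_const (t ^ 2)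
  have hmax_t : ∀ ε > 0, ∀ᶠ a in l, ∀ i, |w a i * t| < ε := fun ε hε => by
    filter_upwards [hmax (ε / (|t| + 1)) (by positivity)] with a ha i
    rw [abs_mul]
    calc |w a i| * |t| ≤ |w a i| * (|t| + 1) := by gcongr; linarith
      _ < ε := (lt_div_iff₀ (by positivity)).1 (ha i)
  have hgauss : Tendsto (fun a => ∏ i, charFun (gaussianReal 0 Var[g; μ].toNNReal) (w a i * t)) l
      (𝓝 (charFun (gaussianReal 0 v) t)) := by
    have hexp : charFun (gaussianReal 0 v) t =
        Complex.exp (-((Var[g; μ] * s : ℝ) * t ^ 2 / 2)) := by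
      simp [charFun_gaussianReal, hv]
    simp only [prod_charFun_gaussianReal_zero, Real.coe_toNNReal _ (variance_nonneg g μ), hexp]
    have hcont : Continuous fun x : ℝ => Complex.exp (-(x * t ^ 2 / 2)) := by fun_prop
    exact (hcont.tendsto _).comp (hsum.const_mul _)
  have hreplace := ((prod_sub_prod_isLittleO_sum_sq norm_charFun_le_one norm_charFun_le_one
    (charFun_map_sub_charFun_gaussianReal_isLittleO_sq hgL hmean) hmax_t).trans_isBigO
      (hsum_t.isBigO_one ℝ)).tendsto_zero_of_tendsto tendsto_const_nhds
  simp only [charFun_map_sum_mul_pi hg]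
  simpa using hreplace.add hgauss

lemma tendsto_charFun_map_of_tendsto_integral_sq_sub {Ω : α → Type*} [∀ a, MeasurableSpace (Ω a)]
    {μ : ∀ a, Measure (Ω a)} [∀ a, IsProbabilityMeasure (μ a)] {U V : ∀ a, Ω a → ℝ}
    (hU : ∀ a, MemLp (U a) 2 (μ a)) (hV : ∀ a, MemLp (V a) 2 (μ a))
    (hUV : Tendsto (fun a => ∫ ω, (U a ω - V a ω) ^ 2 ∂μ a) l (𝓝 0)) {t : ℝ} {z : ℂ}
    (hlim : Tendsto (fun a => charFun ((μ a).map (V a)) t) l (𝓝 z)) :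
    Tendsto (fun a => charFun ((μ a).map (U a)) t) l (𝓝 z) := by
  have hsub : Tendsto (fun a => charFun ((μ a).map (U a)) t - charFun ((μ a).map (V a)) t) l
      (𝓝 0) :=
    squeeze_zero_norm (fun a => norm_charFun_map_sub_charFun_map_le (hU a) (hV a) t)
      (by simpa using hUV.sqrt.const_mul |t|)
  simpa using hsub.add hlim

end CentralLimit

section GaussianVector

open scoped Matrix.Norms.L2Operator

lemma tendsto_integral_of_tendstoInDistribution {α E Ω' : Type*} {Ω : α → Type*}
    [TopologicalSpace E] [MeasurableSpace E] [OpensMeasurableSpace E]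
    {l : Filter α} [∀ a, MeasurableSpace (Ω a)] [MeasurableSpace Ω'] {P : ∀ a, Measure (Ω a)}
    [∀ a, IsProbabilityMeasure (P a)] {P' : Measure Ω'} [IsProbabilityMeasure P']
    {X : ∀ a, Ω a → E} {Z : Ω' → E} (hX : TendstoInDistribution X l Z P P')
    (f : BoundedContinuousFunction E ℝ) :
    Tendsto (fun a => ∫ ω, f (X a ω) ∂P a) l (𝓝 (∫ ω, f (Z ω) ∂P')) := by
  have hf := ProbabilityMeasure.tendsto_iff_forall_integral_tendsto.1 hX.tendsto f
  simpa only [ProbabilityMeasure.coe_mk, integral_map (hX.forall_aemeasurable _)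
    f.continuous.measurable.aestronglyMeasurable, integral_map hX.aemeasurable_limit
    f.continuous.measurable.aestronglyMeasurable] using hf

open Asymptotics in
theorem tendstoInDistribution_centeredSum {h : ℝ → ℝ} {c : ℝ} (hh : Measurable h)
    (hL : MemLp h 2 (gaussianReal 0 1))
    (hzero : (fun ρ => noiseCov h ρ - c * ρ) =O[𝓝 0] fun ρ => ρ ^ 2)
    (hone : ContinuousWithinAt (noiseCov h) (Set.Iic 1) 1)
    {ι κ Ω : ℕ → Type*} [∀ n, Fintype (ι n)] [∀ n, DecidableEq (ι n)] [∀ n, Fintype (κ n)]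
    [∀ n, MeasurableSpace (Ω n)] {P : ∀ n, Measure (Ω n)} [∀ n, IsProbabilityMeasure (P n)]
    {A : ∀ n, Matrix (ι n) (κ n) ℝ} (hdiag : ∀ n i, (A n * (A n)ᵀ) i i = 1)
    (hA : Tendsto (fun n => ‖A n * (A n)ᵀ - 1‖) atTop (𝓝 0))
    {T : ∀ n, Ω n → ι n → ℝ} (hT : ∀ n, Measurable (T n))
    (hlaw : ∀ n, (P n).map (T n) = (stdNormalPi (κ n)).map (A n *ᵥ ·))
    {w : ∀ n, ι n → ℝ} (hmax : ∀ ε > 0, ∀ᶠ n in atTop, ∀ i, |w n i| < ε) {s : ℝ}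
    (hsum : Tendsto (fun n => ∑ i, w n i ^ 2) atTop (𝓝 s)) {v : ℝ≥0}
    (hv : Var[h; gaussianReal 0 1] * s = v) :
    TendstoInDistribution (fun n ω => centeredSum h (w n) (T n ω)) atTop id P
      (gaussianReal 0 v) := by
  choose B hB hBA using fun n => exists_posSemidef_mul_self_eq
    (S := A n * (A n)ᵀ) (by simpa using posSemidef_self_mul_conjTranspose (A n))
  have hBt (n) : B n * (B n)ᵀ = A n * (A n)ᵀ := by
    rw [← hBA, show (B n)ᵀ = B n by simpa using (hB n).isHermitian.eq]
  have hrow (n) (i : ι n) : B n i ⬝ᵥ B n i = 1 := by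
    rw [← hdiag n i, ← hBt]
    rfl
  have hmeas (n) : Measurable (centeredSum h (w n)) := measurable_centeredSum hh (w n)
  have hlawB (n) : (P n).map (fun ω => centeredSum h (w n) (T n ω)) =
      (stdNormalPi (ι n)).map fun z => centeredSum h (w n) (B n *ᵥ z) := by
    have hmap := congrArg (Measure.map (centeredSum h (w n)))
      ((hlaw n).trans (map_mulVec_stdNormalPi_congr (hBt n).symm))
    rwa [Measure.map_map (hmeas n) (hT n), Measure.map_map (hmeas n) (by fun_prop)] at hmap
  refine ⟨fun n => ((hmeas n).comp (hT n)).aemeasurable, aemeasurable_id,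
    ProbabilityMeasure.tendsto_iff_tendsto_charFun.2 fun t => ?_⟩
  simp only [ProbabilityMeasure.coe_mk, hlawB, Measure.map_id]
  have hindep := tendsto_charFun_map_sum_mul_pi (μ := gaussianReal 0 1)
    (hh.sub_const (∫ y, h y ∂gaussianReal 0 1)) (hL.sub (memLp_const _))
    (by simp [integral_sub (hL.integrable one_le_two) (integrable_const _)]) hmax hsum
    (by rwa [variance_sub_const hL.aestronglyMeasurable]) t
  refine tendsto_charFun_map_of_tendsto_integral_sq_sub
    (fun n => memLp_centeredSum_mulVec hL (w n) (hrow n)) (fun n => ?_)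
    (tendsto_integral_sq_centeredSum_mulVec_sub hh hL hzero hone hB hrow
      (by simpa only [hBA] using hA) hsum) hindep
  simpa using memLp_centeredSum_mulVec hL (w n) one_dotProduct_one_self

end GaussianVector

section Estimator

open scoped Matrix.Norms.L2Operator

lemma sqrt_mul_weighted_sum_sub_eq_centeredSum {ι : Type*} [Fintype ι] {s : Set ℝ}
    (hs : MeasurableSet s) {c : ℝ} (hc : c ≠ 0) (hsc : (gaussianReal 0 1).real s = c⁻¹) (r : ℝ)
    (y x : ι → ℝ) {p : ι → Prop} [DecidablePred p] (hp : ∀ i, p i ↔ x i ∈ s) :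
    √r * (c / r * ∑ i, (if p i then y i else 0) - 1 / r * ∑ i, y i) =
      centeredSum (s.indicator 1) ((c / √r) • y) x := by
  have hterm (i : ι) : (c / √r) * y i * (s.indicator 1 (x i) - c⁻¹) =
      1 / √r * (c * (if p i then y i else 0) - y i) := by
    by_cases h : x i ∈ s
    · simp only [h, hp, Set.indicator_of_mem, if_true, Pi.one_apply]
      field_simp
    · simp only [h, hp, Set.indicator_of_notMem, not_false_eq_true, if_false,
        mul_zero, zero_sub]
      field_simp
  simp only [centeredSum, integral_indicator_one hs, hsc, Pi.smul_apply, smul_eq_mul, hterm]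
  rw [← Finset.mul_sum, Finset.sum_sub_distrib, ← Finset.mul_sum, ← Real.sqrt_div_self']
  ring

lemma sum_sq_div_sqrt_smul {ι : Type*} [Fintype ι] {r : ℝ} (hr : 0 ≤ r) (c : ℝ) (y : ι → ℝ) :
    ∑ i, ((c / √r) • y) i ^ 2 = c ^ 2 / r * ∑ i, y i ^ 2 := by
  simp only [Pi.smul_apply, smul_eq_mul, mul_pow, div_pow, Real.sq_sqrt hr, Finset.mul_sum]

lemma sum_sq_div_sqrt_smul_le {ι : Type*} [Fintype ι] {r M : ℝ} (hr : 0 ≤ r) (hM : 0 ≤ M) (c : ℝ)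
    {y : ι → ℝ} (hy : ∑ i, y i ^ 2 ≤ r * M) : ∑ i, ((c / √r) • y) i ^ 2 ≤ c ^ 2 * M := by
  rw [sum_sq_div_sqrt_smul hr, div_mul_eq_mul_div, mul_div_assoc]
  exact mul_le_mul_of_nonneg_left (div_le_of_le_mul₀ hr hM (by rwa [mul_comm])) (sq_nonneg c)

lemma eventually_abs_div_sqrt_smul_lt {α : Type*} {l : Filter α} {ι : α → Type*} {r : α → ℝ}
    (hr : ∀ a, 0 ≤ r a) {c : ℝ} {y : ∀ a, ι a → ℝ}
    (hy : ∀ ε > 0, ∀ᶠ a in l, ∀ i, y a i ^ 2 / r a < ε) :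
    ∀ ε > 0, ∀ᶠ a in l, ∀ i, |((c / √(r a)) • y a) i| < ε := by
  intro ε hε
  filter_upwards [hy (ε ^ 2 / (c ^ 2 + 1)) (by positivity)] with a ha i
  refine abs_lt_of_sq_lt_sq ?_ hε.le
  have hlt := (lt_div_iff₀ (by positivity)).1 (ha i)
  have hnonneg : 0 ≤ y a i ^ 2 / r a := div_nonneg (sq_nonneg _) (hr a)
  calc ((c / √(r a)) • y a) i ^ 2 = y a i ^ 2 / r a * c ^ 2 := by
        simp only [Pi.smul_apply, smul_eq_mul, mul_pow, div_pow, Real.sq_sqrt (hr a)]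
        ring
    _ < ε ^ 2 := by linarith

variable {q : ℕ → ℝ} {K : ℕ}

lemma fkfun_one (hK : 2 ≤ K) (hq : ∀ m : ℕ, 0 < m → m < K → stdGaussianCDF (q m) = (m : ℝ) / K)
    (k : Fin K) : fkfun q K k 1 = ((K : ℝ) - 1) / K ^ 2 := by
  rw [← noiseCov_indicator_armSet hq k (by norm_num),
    noiseCov_one (measurable_one.indicator (measurableSet_armSet q k)),
    variance_indicator_armSet hK hq k]

lemma tendsto_l2_opNorm_inv_sqrt_smul_sqrt_map_fkfun_sub_one (hK : 2 ≤ K)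
    (hq : ∀ m : ℕ, 0 < m → m < K → stdGaussianCDF (q m) = (m : ℝ) / K) (k : Fin K)
    {α : Type*} {l : Filter α} {ι : α → Type*} [∀ a, Fintype (ι a)] [∀ a, DecidableEq (ι a)]
    {S Q : ∀ a, Matrix (ι a) (ι a) ℝ} (hdiag : ∀ a i, S a i i = 1)
    (hS : Tendsto (fun a => ‖S a - 1‖) l (𝓝 0)) (hQ : ∀ a, (Q a).PosSemidef)
    (hQS : ∀ a, Q a * Q a = (S a).map (fkfun q K k)) :
    Tendsto (fun a => ‖((K : ℝ) / √((K : ℝ) - 1)) • Q a - 1‖) l (𝓝 0) := by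
  have hK2 : (2 : ℝ) ≤ K := by exact_mod_cast hK
  obtain ⟨c, hzero⟩ := exists_fkfun_sub_mul_isBigO_sq q k
  have hlim := tendsto_l2_opNorm_map_sub_smul_one hzero (continuousWithinAt_fkfun q k)
    (fun a i => (hdiag a i).le) hS
  have hscale : (K : ℝ) / √((K : ℝ) - 1) = (√(((K : ℝ) - 1) / K ^ 2))⁻¹ := by
    rw [Real.sqrt_div' _ (by positivity), Real.sqrt_sq (by positivity), inv_div]
  rw [hscale]
  refine tendsto_l2_opNorm_inv_sqrt_smul_sub_one (div_pos (by linarith) (by positivity)) hQ ?_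
  simpa only [hQS, fkfun_one hK hq] using hlim

end Estimator

section Arms

open scoped Matrix.Norms.L2Operator

variable {q : ℕ → ℝ} {K : ℕ}

theorem tendstoInDistribution_centeredSum_indicator_armSet (hK : 2 ≤ K)
    (hq : ∀ m : ℕ, 0 < m → m < K → stdGaussianCDF (q m) = (m : ℝ) / K) (k : Fin K)
    {ι κ Ω : ℕ → Type*} [∀ n, Fintype (ι n)] [∀ n, DecidableEq (ι n)] [∀ n, Fintype (κ n)]
    [∀ n, MeasurableSpace (Ω n)] {P : ∀ n, Measure (Ω n)} [∀ n, IsProbabilityMeasure (P n)]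
    {A : ∀ n, Matrix (ι n) (κ n) ℝ} (hdiag : ∀ n i, (A n * (A n)ᵀ) i i = 1)
    (hA : Tendsto (fun n => ‖A n * (A n)ᵀ - 1‖) atTop (𝓝 0))
    {T : ∀ n, Ω n → ι n → ℝ} (hT : ∀ n, Measurable (T n))
    (hlaw : ∀ n, (P n).map (T n) = (stdNormalPi (κ n)).map (A n *ᵥ ·))
    {w : ∀ n, ι n → ℝ} (hmax : ∀ ε > 0, ∀ᶠ n in atTop, ∀ i, |w n i| < ε) {v : ℝ≥0}
    (hsum : Tendsto (fun n => ∑ i, w n i ^ 2) atTop (𝓝 (K ^ 2 / ((K : ℝ) - 1) * v))) :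
    TendstoInDistribution (fun n ω => centeredSum ((armSet q K k).indicator 1) (w n) (T n ω))
      atTop id P (gaussianReal 0 v) := by
  have hs := measurableSet_armSet q k
  have hK2 : (2 : ℝ) ≤ K := by exact_mod_cast hK
  have hK1 : (K : ℝ) - 1 ≠ 0 := by linarith
  obtain ⟨c, hc⟩ := exists_noiseCov_indicator_armSet_sub_mul_isBigO_sq hq k
  refine tendstoInDistribution_centeredSum (measurable_one.indicator hs)
    (memLp_indicator_one hs 2) hc (continuousWithinAt_noiseCov_indicator_armSet hq k) hdiag hA hT
    hlaw hmax hsum ?_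
  rw [variance_indicator_armSet hK hq k]
  field_simp

end Arms

/-- **Asymptotic normality under a vanishing perturbation of the identity.**
For matrices `Σ⁽ⁿ⁾` in the correlation elliptope with `‖Σ⁽ⁿ⁾ − I‖_op → 0`, Gaussianization
`T⁽ⁿ⁾ ~ N(0, Σ⁽ⁿ⁾)`, `D_i = g(T_i)`, and `Ỹ(k) = f_k(I)^{−1/2} f_k(Σ⁽ⁿ⁾)^{1/2} Y(k)` (with
`Q_n = f_k(Σ⁽ⁿ⁾)^{1/2}` the unique positive semidefinite square root and
`f_k(I)^{−1/2} = (K/√(K−1)) I`), if (1) `max_i Ỹ_i(k)²/n → 0`, (2)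
`((K−1)/n)‖Ỹ(k)‖² → σ² > 0`, and (3) `‖Y⁽ⁿ⁾(k)‖² ≤ nM`, then `√n (τ̂_k − τ_k)` converges
in distribution to `N(0, σ²)`. -/
theorem asymptotic_normality_vanishing_perturbation
    (K : ℕ) (hK : 2 ≤ K) (k : Fin K)
    (q : ℕ → ℝ) (hq : ∀ m : ℕ, 0 < m → m < K → stdGaussianCDF (q m) = (m : ℝ) / K)
    (Ω : ℕ → Type) [∀ nn, MeasureSpace (Ω nn)]
    [∀ nn, IsProbabilityMeasure (volume : Measure (Ω nn))]
    (S : ∀ nn : ℕ, Matrix (Fin nn) (Fin nn) ℝ)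
    (hSpsd : ∀ nn, (S nn).PosSemidef) (hSdiag : ∀ nn (i : Fin nn), S nn i i = 1)
    (hSop : Tendsto (fun nn => opNorm (S nn - 1)) atTop (𝓝 0))
    (Y : ∀ nn : ℕ, Fin nn → ℝ)
    (A : ∀ nn : ℕ, Matrix (Fin nn) (Fin nn) ℝ) (hA : ∀ nn, A nn * (A nn)ᵀ = S nn)
    (T : ∀ nn : ℕ, Ω nn → Fin nn → ℝ) (hTmeas : ∀ nn, Measurable (T nn))
    (hTlaw : ∀ nn, Measure.map (T nn) volume =
      Measure.map (fun z => A nn *ᵥ z) (Measure.pi fun _ : Fin nn => gaussianReal 0 1))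
    (D : ∀ nn : ℕ, Ω nn → Fin nn → Fin K)
    (hD : ∀ nn ω i (kk : Fin K), D nn ω i = kk ↔ T nn ω i ∈ armSet q K kk)
    (Q : ∀ nn : ℕ, Matrix (Fin nn) (Fin nn) ℝ)
    (hQpsd : ∀ nn, (Q nn).PosSemidef)
    (hQsq : ∀ nn, Q nn * Q nn = Matrix.of fun i j => fkfun q K k (S nn i j))
    (Ytil : ∀ nn : ℕ, Fin nn → ℝ)
    (hYtil : ∀ nn, Ytil nn = ((K : ℝ) / Real.sqrt ((K : ℝ) - 1)) • (Q nn *ᵥ Y nn))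
    (σ2 : ℝ≥0) (hσ2 : 0 < σ2)
    (h1 : ∀ ε > (0 : ℝ), ∀ᶠ nn in atTop, ∀ i : Fin nn, Ytil nn i ^ 2 / nn < ε)
    (h2 : Tendsto (fun nn => ((K : ℝ) - 1) / nn * ∑ i, Ytil nn i ^ 2) atTop (𝓝 (σ2 : ℝ)))
    (M : ℝ) (hM : 0 < M) (h3 : ∀ nn, ∑ i, Y nn i ^ 2 ≤ nn * M) :
    ∀ f : BoundedContinuousFunction ℝ ℝ,
      Tendsto
        (fun nn : ℕ => ∫ ω, f (Real.sqrt (nn : ℝ) *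
          ((K : ℝ) / (nn : ℝ) * ∑ i, (if D nn ω i = k then Y nn i else 0) -
            (1 : ℝ) / (nn : ℝ) * ∑ i, Y nn i)))
        atTop (𝓝 (∫ x, f x ∂(gaussianReal 0 σ2))) := by
  intro f
  have hK2 : (2 : ℝ) ≤ K := by exact_mod_cast hK
  have hr (nn : ℕ) : (0 : ℝ) ≤ nn := nn.cast_nonneg
  simp only [opNorm_eq_norm] at hSop
  have hclose := tendsto_sum_sq_mulVec_sub (w := fun nn : ℕ => ((K : ℝ) / √nn) • Y nn)
    (tendsto_l2_opNorm_inv_sqrt_smul_sqrt_map_fkfun_sub_one hK hq k hSdiag hSop hQpsd hQsq)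
    (fun nn => sum_sq_div_sqrt_smul_le (hr nn) hM.le K (h3 nn))
  simp only [mulVec_smul, smul_mulVec, ← hYtil] at hclose
  have hsum : Tendsto (fun nn : ℕ => ∑ i, (((K : ℝ) / √nn) • Ytil nn) i ^ 2) atTop
      (𝓝 (K ^ 2 / ((K : ℝ) - 1) * σ2)) := by
    refine (h2.const_mul _).congr fun nn => ?_
    rw [sum_sq_div_sqrt_smul (hr nn)]
    field_simp [show (K : ℝ) - 1 ≠ 0 by linarith]
  have hclt := tendstoInDistribution_centeredSum_indicator_armSet hK hq k
    (fun nn i => by rw [hA, hSdiag]) (by simpa only [hA] using hSop) hTmeas hTlaw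
    (eventually_abs_lt_of_tendsto_sum_sq_sub hclose (eventually_abs_div_sqrt_smul_lt hr h1))
    (tendsto_sum_sq_of_tendsto_sum_sq_sub hclose hsum)
  simp only [sqrt_mul_weighted_sum_sub_eq_centeredSum (measurableSet_armSet q k)
    (by linarith : (K : ℝ) ≠ 0) (gaussianReal_real_armSet hK hq k) _ _ _ (hD _ _ · k)]
  exact tendsto_integral_of_tendstoInDistribution hclt f

end
end

section
/- (Hájek's lemma.) Let (T_n) and (S_n) be sequences of square-integrable real random variables, each pair (T_n, S_n) defined on a common probability space, with Var(T_n) > 0 for all n. If (T_n − E T_n)/√Var(T_n) converges in distribution to a probability law L and E[(T_n − S_n)²]/Var(T_n) → 0, then Var(T_n)/Var(S_n) → 1 (in particular Var(S_n) > 0 for all sufficiently large n) and (S_n − E S_n)/√Var(S_n) also converges in distribution to L. -/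
open MeasureTheory ProbabilityTheory Filter
open scoped BigOperators ENNReal NNReal Topology

noncomputable section

/-- Variance of a real random variable on a measure space. -/
def var {Ω : Type*} [MeasureSpace Ω] (U : Ω → ℝ) : ℝ :=
  ∫ ω, (U ω - ∫ ω', U ω') ^ 2

/-!
Write `t`, `s` for the standard deviations of `T`, `S`. By Cauchy-Schwarz, `|t - s| ≤ √Var(T - S)`;
dividing by `t` gives `s / t → 1`. The standardizations `T*`, `S*` have unit variance, so by AM-GM
`Var(T* - S*) = (2 t s - 2 cov(T, S)) / (t s) ≤ (t² + s² - 2 cov(T, S)) / (t s)`,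
and the right-hand side is `Var(T - S) / (t s) → 0`. Hence `T* - S* → 0` in `L²`, so the integrals
of a bounded Lipschitz function against the laws of `T*` and `S*` have the same limit; such
functions determine weak convergence.
-/

section Variance

variable {Ω : Type*} {m : MeasurableSpace Ω} {μ : Measure Ω} {X Y : Ω → ℝ}

lemma covariance_sq_le [IsFiniteMeasure μ] (hX : MemLp X 2 μ) (hY : MemLp Y 2 μ) :
    cov[X, Y; μ] ^ 2 ≤ Var[X; μ] * Var[Y; μ] := by
  have h_nonneg (c : ℝ) : 0 ≤ Var[X; μ] * (c * c) + 2 * cov[X, Y; μ] * c + Var[Y; μ] :=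
    calc 0 ≤ Var[c • X + Y; μ] := variance_nonneg _ _
      _ = Var[X; μ] * (c * c) + 2 * cov[X, Y; μ] * c + Var[Y; μ] := by
        rw [variance_add (hX.const_smul c) hY, variance_smul, covariance_smul_left]
        ring
  have h_discrim := discrim_le_zero h_nonneg
  rw [discrim] at h_discrim
  linarith

lemma covariance_le_sqrt_variance_mul [IsFiniteMeasure μ] (hX : MemLp X 2 μ) (hY : MemLp Y 2 μ) :
    cov[X, Y; μ] ≤ √Var[X; μ] * √Var[Y; μ] := by
  rw [← Real.sqrt_mul (variance_nonneg X μ)]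
  exact Real.le_sqrt_of_sq_le (covariance_sq_le hX hY)

lemma abs_sqrt_variance_sub_le [IsFiniteMeasure μ] (hX : MemLp X 2 μ) (hY : MemLp Y 2 μ) :
    |√Var[X; μ] - √Var[Y; μ]| ≤ √Var[X - Y; μ] := by
  apply Real.abs_le_sqrt
  rw [variance_sub hX hY, sub_sq, Real.sq_sqrt (variance_nonneg X μ),
    Real.sq_sqrt (variance_nonneg Y μ)]
  linarith [covariance_le_sqrt_variance_mul hX hY]

lemma eLpNorm_two_eq_ofReal_sqrt_variance (hX : MemLp X 2 μ) (hX0 : μ[X] = 0) :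
    eLpNorm X 2 μ = ENNReal.ofReal √Var[X; μ] := by
  rw [hX.eLpNorm_eq_integral_rpow_norm two_ne_zero ENNReal.ofNat_ne_top,
    variance_of_integral_eq_zero hX.aemeasurable hX0, Real.sqrt_eq_rpow]
  simp

end Variance

section Standardization

variable {Ω : Type*} {m : MeasurableSpace Ω} {μ : Measure Ω} {X Y : Ω → ℝ}

/-- The standardization `(X - E X) / √Var X` of a real random variable `X` under the measure `μ`. It
is identically zero when `Var[X; μ] = 0`. -/
def standardization (X : Ω → ℝ) (μ : Measure Ω) : Ω → ℝ :=
  fun ω ↦ (X ω - μ[X]) / √Var[X; μ]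

lemma memLp_standardization [IsFiniteMeasure μ] {p : ℝ≥0∞} (hX : MemLp X p μ) :
    MemLp (standardization X μ) p μ := by
  unfold standardization
  simp only [div_eq_mul_inv]
  exact (hX.sub (memLp_const μ[X])).mul_const (√Var[X; μ])⁻¹

lemma integral_standardization [IsProbabilityMeasure μ] (hX : Integrable X μ) :
    μ[standardization X μ] = 0 := by
  simp [standardization, integral_div, integral_sub hX (integrable_const _)]

lemma covariance_standardization [IsProbabilityMeasure μ] (hX : Integrable X μ)
    (hY : Integrable Y μ) :
    cov[standardization X μ, standardization Y μ; μ] =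
      cov[X, Y; μ] / (√Var[X; μ] * √Var[Y; μ]) := by
  unfold standardization
  rw [covariance_fun_div_left, covariance_fun_div_right, covariance_sub_const_left hX,
    covariance_sub_const_right hY, div_div, mul_comm]

lemma variance_standardization [IsProbabilityMeasure μ] (hX : Integrable X μ)
    (hX_pos : 0 < Var[X; μ]) : Var[standardization X μ; μ] = 1 := by
  have h_meas : AEMeasurable (standardization X μ) μ :=
    (hX.aemeasurable.sub_const _).div_const _
  rw [← covariance_self h_meas, covariance_standardization hX hX, covariance_self hX.aemeasurable,
    Real.mul_self_sqrt hX_pos.le, div_self hX_pos.ne']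

lemma variance_standardization_sub_le [IsProbabilityMeasure μ] (hX : MemLp X 2 μ)
    (hY : MemLp Y 2 μ) (hX_pos : 0 < Var[X; μ]) (hY_pos : 0 < Var[Y; μ]) :
    Var[standardization X μ - standardization Y μ; μ] ≤
      Var[X - Y; μ] / (√Var[X; μ] * √Var[Y; μ]) := by
  have hX_int : Integrable X μ := hX.integrable one_le_two
  have hY_int : Integrable Y μ := hY.integrable one_le_two
  have h_amgm : 2 * √Var[X; μ] * √Var[Y; μ] ≤ Var[X; μ] + Var[Y; μ] := by
    simpa only [Real.sq_sqrt hX_pos.le, Real.sq_sqrt hY_pos.le] using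
      two_mul_le_add_sq √Var[X; μ] √Var[Y; μ]
  calc Var[standardization X μ - standardization Y μ; μ]
      = 1 - 2 * (cov[X, Y; μ] / (√Var[X; μ] * √Var[Y; μ])) + 1 := by
        rw [variance_sub (memLp_standardization hX) (memLp_standardization hY),
          variance_standardization hX_int hX_pos, variance_standardization hY_int hY_pos,
          covariance_standardization hX_int hY_int]
    _ = (2 * √Var[X; μ] * √Var[Y; μ] - 2 * cov[X, Y; μ]) / (√Var[X; μ] * √Var[Y; μ]) := by
        field_simp
        ring
    _ ≤ (Var[X; μ] - 2 * cov[X, Y; μ] + Var[Y; μ]) / (√Var[X; μ] * √Var[Y; μ]) := by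
        gcongr
        linarith
    _ = Var[X - Y; μ] / (√Var[X; μ] * √Var[Y; μ]) := by rw [variance_sub hX hY]

lemma eLpNorm_standardization_sub_le [IsProbabilityMeasure μ] (hX : MemLp X 2 μ)
    (hY : MemLp Y 2 μ) (hX_pos : 0 < Var[X; μ]) (hY_pos : 0 < Var[Y; μ]) :
    eLpNorm (standardization X μ - standardization Y μ) 2 μ ≤
      ENNReal.ofReal √(Var[X - Y; μ] / (√Var[X; μ] * √Var[Y; μ])) := by
  have hX' := memLp_standardization hX
  have hY' := memLp_standardization hY
  have h_mean : μ[standardization X μ - standardization Y μ] = 0 := by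
    rw [integral_sub' (hX'.integrable one_le_two) (hY'.integrable one_le_two),
      integral_standardization (hX.integrable one_le_two),
      integral_standardization (hY.integrable one_le_two), sub_zero]
  rw [eLpNorm_two_eq_ofReal_sqrt_variance (hX'.sub hY') h_mean]
  gcongr
  exact variance_standardization_sub_le hX hY hX_pos hY_pos

end Standardization

section ConvergenceInDistribution

variable {ι Ω' E : Type*} {Ω : ι → Type*} {m : ∀ i, MeasurableSpace (Ω i)}
  {μ : (i : ι) → Measure (Ω i)} [∀ i, IsProbabilityMeasure (μ i)]
  {m' : MeasurableSpace Ω'} {μ' : Measure Ω'} [IsProbabilityMeasure μ']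
  {mE : MeasurableSpace E} {X Y : (i : ι) → Ω i → E} {Z : Ω' → E} {l : Filter ι}

lemma tendstoInDistribution_iff_forall_integral_tendsto [TopologicalSpace E]
    [OpensMeasurableSpace E] (hX : ∀ i, AEMeasurable (X i) (μ i)) (hZ : AEMeasurable Z μ') :
    TendstoInDistribution X l Z μ μ' ↔ ∀ f : BoundedContinuousFunction E ℝ,
      Tendsto (fun i ↦ ∫ ω, f (X i ω) ∂μ i) l (𝓝 (∫ ω, f (Z ω) ∂μ')) := by
  refine Iff.trans ⟨fun h ↦ h.tendsto, fun h ↦ ⟨hX, hZ, h⟩⟩ <|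
    ProbabilityMeasure.tendsto_iff_forall_integral_tendsto.trans <| forall_congr' fun f ↦ ?_
  have hf {ν : Measure E} : AEStronglyMeasurable f ν := f.continuous.measurable.aestronglyMeasurable
  simp only [ProbabilityMeasure.coe_mk, integral_map (hX _) hf, integral_map hZ hf]

lemma enorm_integral_comp_sub_le_mul_eLpNorm {α : Type*} {mα : MeasurableSpace α} {ν : Measure α}
    [IsProbabilityMeasure ν] [SeminormedAddCommGroup E] [SecondCountableTopology E] [BorelSpace E]
    {U V : α → E} (hU : AEMeasurable U ν) (hV : AEMeasurable V ν)
    {f : BoundedContinuousFunction E ℝ} {K : ℝ≥0} (hf : LipschitzWith K f) {p : ℝ≥0∞} (hp : 1 ≤ p) :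
    ‖∫ ω, f (U ω) ∂ν - ∫ ω, f (V ω) ∂ν‖ₑ ≤ K * eLpNorm (U - V) p ν := by
  have h_int {W : α → E} (hW : AEMeasurable W ν) : Integrable (fun ω ↦ f (W ω)) ν :=
    (f.integrable (ν.map W)).comp_aemeasurable hW
  calc ‖∫ ω, f (U ω) ∂ν - ∫ ω, f (V ω) ∂ν‖ₑ
      = ‖∫ ω, (f (U ω) - f (V ω)) ∂ν‖ₑ := by rw [integral_sub (h_int hU) (h_int hV)]
    _ ≤ ∫⁻ ω, ‖f (U ω) - f (V ω)‖ₑ ∂ν := enorm_integral_le_lintegral_enorm _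
    _ ≤ ∫⁻ ω, K * ‖U ω - V ω‖ₑ ∂ν := by
      gcongr with ω
      simpa only [edist_eq_enorm_sub] using hf (U ω) (V ω)
    _ = K * eLpNorm (U - V) 1 ν := by
      rw [lintegral_const_mul' _ _ ENNReal.coe_ne_top, eLpNorm_one_eq_lintegral_enorm]
      rfl
    _ ≤ K * eLpNorm (U - V) p ν := by
      gcongr
      exact eLpNorm_le_eLpNorm_of_exponent_le hp (hU.sub hV).aestronglyMeasurable

lemma tendstoInDistribution_of_tendsto_eLpNorm_sub [SeminormedAddCommGroup E]
    [SecondCountableTopology E] [BorelSpace E] [l.IsCountablyGenerated]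
    (hXZ : TendstoInDistribution X l Z μ μ') (hY : ∀ i, AEMeasurable (Y i) (μ i)) {p : ℝ≥0∞}
    (hp : 1 ≤ p) (hXY : Tendsto (fun i ↦ eLpNorm (X i - Y i) p (μ i)) l (𝓝 0)) :
    TendstoInDistribution Y l Z μ μ' := by
  have hX := hXZ.forall_aemeasurable
  have hZ := hXZ.aemeasurable_limit
  refine ⟨hY, hZ, tendsto_iff_forall_lipschitz_integral_tendsto.2 ?_⟩
  rintro F ⟨C, hC⟩ ⟨K, hK⟩
  let f : BoundedContinuousFunction E ℝ := ⟨⟨F, hK.continuous⟩, C, hC⟩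
  have h_sub : Tendsto (fun i ↦ ∫ ω, f (X i ω) ∂μ i - ∫ ω, f (Y i ω) ∂μ i) l (𝓝 0) := by
    rw [tendsto_zero_iff_enorm_tendsto_zero]
    refine tendsto_of_tendsto_of_tendsto_of_le_of_le tendsto_const_nhds ?_ (fun _ ↦ zero_le)
      fun i ↦ enorm_integral_comp_sub_le_mul_eLpNorm (hX i) (hY i) (f := f) hK hp
    simpa using ENNReal.Tendsto.const_mul hXY (.inr ENNReal.coe_ne_top)
  have h_lim := (tendstoInDistribution_iff_forall_integral_tendsto hX hZ).1 hXZ f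
  have hF {ν : Measure E} : AEStronglyMeasurable F ν := hK.continuous.aestronglyMeasurable
  simp only [ProbabilityMeasure.coe_mk, integral_map (hY _) hF, integral_map hZ hF]
  simpa using! h_lim.sub h_sub

end ConvergenceInDistribution

section Hajek

variable {ι Ω' : Type*} {Ω : ι → Type*} {m : ∀ i, MeasurableSpace (Ω i)}
  {μ : (i : ι) → Measure (Ω i)} [∀ i, IsProbabilityMeasure (μ i)]
  {m' : MeasurableSpace Ω'} {μ' : Measure Ω'} [IsProbabilityMeasure μ']
  {T S : (i : ι) → Ω i → ℝ} {Z : Ω' → ℝ} {l : Filter ι}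

lemma tendsto_sqrt_variance_div (hT : ∀ i, MemLp (T i) 2 (μ i)) (hS : ∀ i, MemLp (S i) 2 (μ i))
    (hT_pos : ∀ᶠ i in l, 0 < Var[T i; μ i])
    (hTS : Tendsto (fun i ↦ Var[T i - S i; μ i] / Var[T i; μ i]) l (𝓝 0)) :
    Tendsto (fun i ↦ √Var[T i; μ i] / √Var[S i; μ i]) l (𝓝 1) := by
  have h_bound : ∀ᶠ i in l, ‖1 - √Var[S i; μ i] / √Var[T i; μ i]‖ ≤
      √(Var[T i - S i; μ i] / Var[T i; μ i]) := by
    filter_upwards [hT_pos] with i hi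
    have h_sd : 0 < √Var[T i; μ i] := Real.sqrt_pos.2 hi
    rw [one_sub_div h_sd.ne', Real.norm_eq_abs, abs_div, abs_of_pos h_sd,
      Real.sqrt_div (variance_nonneg _ _)]
    gcongr
    exact abs_sqrt_variance_sub_le (hT i) (hS i)
  have h_sqrt : Tendsto (fun i ↦ √(Var[T i - S i; μ i] / Var[T i; μ i])) l (𝓝 0) := by
    simpa using hTS.sqrt
  have h_inv : Tendsto (fun i ↦ √Var[S i; μ i] / √Var[T i; μ i]) l (𝓝 1) := by
    simpa using tendsto_const_nhds (x := (1 : ℝ)).sub (squeeze_zero_norm' h_bound h_sqrt)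
  simpa using h_inv.inv₀ one_ne_zero

lemma eventually_variance_pos_of_tendsto (hT : ∀ i, MemLp (T i) 2 (μ i))
    (hS : ∀ i, MemLp (S i) 2 (μ i))
    (hT_pos : ∀ᶠ i in l, 0 < Var[T i; μ i])
    (hTS : Tendsto (fun i ↦ Var[T i - S i; μ i] / Var[T i; μ i]) l (𝓝 0)) :
    ∀ᶠ i in l, 0 < Var[S i; μ i] := by
  filter_upwards [(tendsto_sqrt_variance_div hT hS hT_pos hTS).eventually_ne one_ne_zero] with i hi
  exact Real.sqrt_ne_zero'.1 (div_ne_zero_iff.1 hi).2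

lemma tendsto_eLpNorm_standardization_sub (hT : ∀ i, MemLp (T i) 2 (μ i))
    (hS : ∀ i, MemLp (S i) 2 (μ i)) (hT_pos : ∀ᶠ i in l, 0 < Var[T i; μ i])
    (hTS : Tendsto (fun i ↦ Var[T i - S i; μ i] / Var[T i; μ i]) l (𝓝 0)) :
    Tendsto (fun i ↦ eLpNorm (standardization (T i) (μ i) - standardization (S i) (μ i)) 2 (μ i))
      l (𝓝 0) := by
  have h_ratio := tendsto_sqrt_variance_div hT hS hT_pos hTS
  have h_bound : Tendsto (fun i ↦ ENNReal.ofReal √(Var[T i - S i; μ i] / Var[T i; μ i] *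
      (√Var[T i; μ i] / √Var[S i; μ i]))) l (𝓝 0) := by
    simpa using ENNReal.tendsto_ofReal (hTS.mul h_ratio).sqrt
  refine tendsto_of_tendsto_of_tendsto_of_le_of_le' tendsto_const_nhds h_bound
    (.of_forall fun _ ↦ zero_le) ?_
  filter_upwards [hT_pos, eventually_variance_pos_of_tendsto hT hS hT_pos hTS] with i hTi hSi
  refine (eLpNorm_standardization_sub_le (hT i) (hS i) hTi hSi).trans_eq ?_
  congr 2
  field_simp
  rw [Real.sq_sqrt hTi.le]

theorem hajek_lemma_general [l.IsCountablyGenerated] (hT : ∀ i, MemLp (T i) 2 (μ i))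
    (hS : ∀ i, MemLp (S i) 2 (μ i)) (hT_pos : ∀ᶠ i in l, 0 < Var[T i; μ i])
    (hTZ : TendstoInDistribution (fun i ↦ standardization (T i) (μ i)) l Z μ μ')
    (hTS : Tendsto (fun i ↦ Var[T i - S i; μ i] / Var[T i; μ i]) l (𝓝 0)) :
    Tendsto (fun i ↦ Var[T i; μ i] / Var[S i; μ i]) l (𝓝 1) ∧
      (∀ᶠ i in l, 0 < Var[S i; μ i]) ∧
      TendstoInDistribution (fun i ↦ standardization (S i) (μ i)) l Z μ μ' := by
  have h_ratio := tendsto_sqrt_variance_div hT hS hT_pos hTS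
  refine ⟨?_, eventually_variance_pos_of_tendsto hT hS hT_pos hTS, ?_⟩
  · simpa [div_pow, Real.sq_sqrt (variance_nonneg _ _)] using h_ratio.pow 2
  · exact tendstoInDistribution_of_tendsto_eLpNorm_sub hTZ
      (fun i ↦ (memLp_standardization (hS i)).aemeasurable) one_le_two
      (tendsto_eLpNorm_standardization_sub hT hS hT_pos hTS)

end Hajek

lemma var_eq_variance {Ω : Type*} [MeasureSpace Ω] {U : Ω → ℝ} (hU : AEMeasurable U) :
    var U = Var[U] :=
  (variance_eq_integral hU).symm

/-- **Hájek's lemma.** Let `(T_n)`, `(S_n)` be sequences of square-integrable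
real random variables (each pair on a common probability space) with `Var(T_n) > 0`. If the
standardization of `T_n` converges in distribution to a law `L` and
`E[(T_n − S_n)²]/Var(T_n) → 0`, then `Var(T_n)/Var(S_n) → 1` (in particular `Var(S_n) > 0`
for all sufficiently large `n`) and the standardization of `S_n` also converges in
distribution to `L`. Convergence in distribution is expressed via bounded continuous test
functions. -/
theorem hajek_lemma
    (Ω : ℕ → Type) [∀ n, MeasureSpace (Ω n)]
    [∀ n, IsProbabilityMeasure (volume : Measure (Ω n))]
    (T S : ∀ n, Ω n → ℝ)
    (hTmeas : ∀ n, Measurable (T n)) (hSmeas : ∀ n, Measurable (S n))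
    (hT2 : ∀ n, MemLp (T n) 2 (volume : Measure (Ω n)))
    (hS2 : ∀ n, MemLp (S n) 2 (volume : Measure (Ω n)))
    (hvarT : ∀ n, 0 < var (T n))
    (L : Measure ℝ) [IsProbabilityMeasure L]
    (hconv : ∀ f : BoundedContinuousFunction ℝ ℝ,
      Tendsto (fun n => ∫ ω, f ((T n ω - ∫ ω', T n ω') / Real.sqrt (var (T n))))
        atTop (𝓝 (∫ x, f x ∂L)))
    (hdiff : Tendsto (fun n => (∫ ω, (T n ω - S n ω) ^ 2) / var (T n)) atTop (𝓝 0)) :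
    Tendsto (fun n => var (T n) / var (S n)) atTop (𝓝 1) ∧
    (∀ᶠ n in atTop, 0 < var (S n)) ∧
    ∀ f : BoundedContinuousFunction ℝ ℝ,
      Tendsto (fun n => ∫ ω, f ((S n ω - ∫ ω', S n ω') / Real.sqrt (var (S n))))
        atTop (𝓝 (∫ x, f x ∂L)) := by
  have h_varT n : var (T n) = Var[T n] := var_eq_variance (hTmeas n).aemeasurable
  have h_varS n : var (S n) = Var[S n] := var_eq_variance (hSmeas n).aemeasurable
  simp_rw [h_varT] at hvarT hconv hdiff
  simp_rw [h_varT, h_varS]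
  have hT_std n := (memLp_standardization (hT2 n)).aemeasurable
  have hS_std n := (memLp_standardization (hS2 n)).aemeasurable
  have h_var_sub : Tendsto (fun n ↦ Var[T n - S n] / Var[T n]) atTop (𝓝 0) := by
    refine squeeze_zero (fun n ↦ div_nonneg (variance_nonneg _ _) (hvarT n).le) (fun n ↦ ?_) hdiff
    gcongr
    · exact (hvarT n).le
    · exact variance_le_expectation_sq ((hT2 n).sub (hS2 n)).aestronglyMeasurable
  have hT_lim : TendstoInDistribution (fun n ↦ standardization (T n) volume) atTop id
      (fun _ ↦ volume) L :=
    (tendstoInDistribution_iff_forall_integral_tendsto hT_std aemeasurable_id).2 hconv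
  obtain ⟨h_ratio, hS_pos, hS_lim⟩ :=
    hajek_lemma_general hT2 hS2 (.of_forall hvarT) hT_lim h_var_sub
  exact ⟨h_ratio, hS_pos,
    (tendstoInDistribution_iff_forall_integral_tendsto hS_std aemeasurable_id).1 hS_lim⟩

end
end
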